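/- There exists n₀ ∈ ℕ such that for all n ≥ n₀ the following holds: if K, T ⊆ ℝ^n are convex bodies with 0 ∈ K, T centrally symmetric, and the centroid of K satisfies b(K) ∈ (1/(n+1))·E_K (where E_K is the inertial ellipsoid of K), then N(K*, T*) ≤ 97^n · N(T,K). -/

import Mathlib

/-!
For a convex body `K` let `h_K` be its support function and `I_K = ∫ exp (-h_K)`; if `0 ∈ K` then
`I_K = n! |K*|`. Given a cover `T ⊆ Λ + K`, put `L = K - K + T`, a symmetric body containing both
`K` and `T`. The theorem combines five volume estimates.

* `exists_cover_of_packing`: a maximal `T*`-separated family in `K*` covers, and small copies of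
  `L* ⊆ K* ∩ T*` around its points are disjoint in `K*`, so `K*` is covered by at most
  `3 ^ n |K*| / |L*|` translates of `T*`.
* `pi_pow_le_volume_mul`: a reverse Santaló inequality `|L| I_L ≥ π ^ n`. For the 1-Lipschitz map
  `R = 2 P - id`, where `P` is the metric projection onto `L`, the substitution
  `(u, v) ↦ (u - κ R v, v + κ R u)` in a Gaussian integral gives an identity for real `|κ| < 1`,
  which continues analytically to `κ = -i τ`. Letting `τ → 1` bounds `π ^ n` by an integral of
  `exp (-4 h_L (u - P u) - 4 h_L (v - P v))` against the Jacobian of `(u, v) ↦ (u + R v, v + R u)`,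
  and the half-sum of the image of `(u, v)` is `P u + P v ∈ 2 L`.
* `volume_sub_add_le`: an elementary Rogers–Shephard inequality gives `|L| ≤ |Λ| 8 ^ n |K|`.
* `lintegral_exp_neg_supp_mul_volume_le`: `I_C |C| ≤ e ^ n 4 ^ n (n + 1)` for a convex body `C` with
  centroid at the origin. Recursive bisection produces simplicial cones, each carrying a controlled
  portion of `C`, whose dual cones cover the space. In each cone the product of the volume of `C`
  and the Laplace integral over the dual cone is at most `e ^ n`, by the first-order condition at
  the point of `C` maximising the product of the coordinates.
* `supp_centered_le`: `h_K ≥ (19 / 20) h_C` for `n ≥ 800`, where `C` is the translate of `K` with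
  centroid at the origin. The variance of a functional on `C` is at most `2 n` times the square of
  its maximum, and the inertial ellipsoid is controlled by the variance.

Together, `N(K*, T*) ≤ |Λ| (n + 1) (96 e · 20 / 19) ^ n π ^ (-n)`, which is at most `97 ^ n |Λ|` for
`n ≥ 800`.
-/

open MeasureTheory Pointwise
open scoped ENNReal RealInnerProductSpace

noncomputable section

abbrev Euc (n : ℕ) := EuclideanSpace ℝ (Fin n)

/-- A convex body: a compact convex set with nonempty interior. -/
def IsConvexBody {n : ℕ} (K : Set (Euc n)) : Prop :=
  Convex ℝ K ∧ IsCompact K ∧ (interior K).Nonempty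

/-- The covering number `N(K,T)`: the least cardinality of a finite set `Λ`
with `K ⊆ Λ + T`.  It is `⊤` if no finite cover exists. -/
def coveringNumber {n : ℕ} (K T : Set (Euc n)) : ℕ∞ :=
  sInf {m : ℕ∞ | ∃ Λ : Finset (Euc n), (Λ.card : ℕ∞) = m ∧ K ⊆ ↑Λ + T}

/-- The polar body `K* = {x : ⟨x,y⟩ ≤ 1 for all y ∈ K}`. -/
def polarBody {n : ℕ} (K : Set (Euc n)) : Set (Euc n) :=
  {x | ∀ y ∈ K, ⟪x, y⟫ ≤ 1}

/-- The centroid (barycenter) of a set `K`. -/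
def centroid {n : ℕ} (K : Set (Euc n)) : Euc n :=
  (volume K).toReal⁻¹ • ∫ x in K, x

/-- The covariance matrix of (the uniform measure on) `K`. -/
def covMatrix {n : ℕ} (K : Set (Euc n)) : Matrix (Fin n) (Fin n) ℝ :=
  Matrix.of ((volume K).toReal⁻¹ •
    ∫ x in K, fun i j => (x i - centroid K i) * (x j - centroid K j))

/-- The inertial ellipsoid `E_K = {x : xᵀ cov(K)⁻¹ x ≤ 1}`. -/
def inertialEllipsoid {n : ℕ} (K : Set (Euc n)) : Set (Euc n) :=
  {x | ∑ i, ∑ j, x i * (covMatrix K)⁻¹ i j * x j ≤ 1}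

/-! ### Jacobians of block maps -/

/-- The matrix of a linear endomorphism of `Euc n` in the standard basis. -/
def stdMat {n : ℕ} (A : Euc n →L[ℝ] Euc n) : Matrix (Fin n) (Fin n) ℝ :=
  LinearMap.toMatrix (EuclideanSpace.basisFun (Fin n) ℝ).toBasis
    (EuclideanSpace.basisFun (Fin n) ℝ).toBasis (A : Euc n →ₗ[ℝ] Euc n)

/-- The linear map with block matrix `[[1, p B], [q A, 1]]`. -/
def blockMap {n : ℕ} (p q : ℝ) (A B : Euc n →L[ℝ] Euc n) : Euc n × Euc n →L[ℝ] Euc n × Euc n :=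
  (ContinuousLinearMap.fst ℝ _ _ + p • (B.comp (ContinuousLinearMap.snd ℝ _ _))).prod
    (ContinuousLinearMap.snd ℝ _ _ + q • (A.comp (ContinuousLinearMap.fst ℝ _ _)))

lemma det_blockMap {n : ℕ} (p q : ℝ) (A B : Euc n →L[ℝ] Euc n) :
    (blockMap p q A B).det = (1 - (p * q) • (stdMat A * stdMat B)).det := by
  have h := LinearMap.det_toMatrix ((EuclideanSpace.basisFun (Fin n) ℝ).toBasis.prod
    (EuclideanSpace.basisFun (Fin n) ℝ).toBasis)
    (blockMap p q A B : Euc n × Euc n →ₗ[ℝ] Euc n × Euc n)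
  rw [ContinuousLinearMap.det, ← h]
  have : LinearMap.toMatrix ((EuclideanSpace.basisFun (Fin n) ℝ).toBasis.prod
    (EuclideanSpace.basisFun (Fin n) ℝ).toBasis) ((EuclideanSpace.basisFun (Fin n) ℝ).toBasis.prod
    (EuclideanSpace.basisFun (Fin n) ℝ).toBasis)
    (blockMap p q A B : Euc n × Euc n →ₗ[ℝ] Euc n × Euc n) =
    Matrix.fromBlocks 1 (p • stdMat B) (q • stdMat A) 1 := by
    ext i j
    rcases i with i | i <;> rcases j with j | j <;>
      simp [LinearMap.toMatrix_apply, blockMap, stdMat, Matrix.one_apply]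
  rw [this, Matrix.det_fromBlocks_one₁₁]
  congr 2
  rw [Matrix.smul_mul, Matrix.mul_smul, smul_smul, mul_comm q p]

lemma abs_stdMat_le {n : ℕ} {A : Euc n →L[ℝ] Euc n} (hA : ‖A‖ ≤ 1) (i j : Fin n) :
    |stdMat A i j| ≤ 1 := by
  have h : stdMat A i j = A (EuclideanSpace.single j 1) i := by
    simp [stdMat, LinearMap.toMatrix_apply]
  rw [h]
  calc |A (EuclideanSpace.single j 1) i| ≤ ‖A (EuclideanSpace.single j 1)‖ := by
        simpa using PiLp.norm_apply_le (A (EuclideanSpace.single j 1)) i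
    _ ≤ ‖A‖ * ‖EuclideanSpace.single j (1:ℝ)‖ := A.le_opNorm _
    _ ≤ 1 := by simpa using hA

lemma continuous_stdMat {n : ℕ} :
    Continuous (stdMat : (Euc n →L[ℝ] Euc n) → Matrix (Fin n) (Fin n) ℝ) := by
  refine continuous_matrix fun i j => ?_
  have h : (fun A : Euc n →L[ℝ] Euc n => stdMat A i j)
      = fun A => A (EuclideanSpace.single j 1) i := by
    funext A; simp [stdMat, LinearMap.toMatrix_apply]
  rw [h]; fun_prop

/-- The Jacobian factor `det (1 + w A B)`, as a polynomial in a complex parameter `w`. -/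
def jac {n : ℕ} (w : ℂ) (A B : Euc n →L[ℝ] Euc n) : ℂ :=
  (1 + w • (stdMat A * stdMat B).map (algebraMap ℝ ℂ)).det

lemma jac_ofReal {n : ℕ} (r : ℝ) (A B : Euc n →L[ℝ] Euc n) :
    jac (r : ℂ) A B = ((1 + r • (stdMat A * stdMat B)).det : ℝ) := by
  rw [jac]
  have := RingHom.map_det (algebraMap ℝ ℂ) (1 + r • (stdMat A * stdMat B))
  rw [Complex.coe_algebraMap] at this
  rw [this]
  congr 1
  ext i j
  simp [Matrix.one_apply, Matrix.map_apply]
  split_ifs <;> simp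

/-- `1 + r A B` has positive determinant when `‖A‖, ‖B‖ ≤ 1` and `|r| < 1`: it stays invertible on
the segment joining it to the identity. -/
lemma det_pos_of_small {n : ℕ} {A B : Euc n →L[ℝ] Euc n} (hA : ‖A‖ ≤ 1) (hB : ‖B‖ ≤ 1)
    {r : ℝ} (hr0 : 0 ≤ r) (hr : r < 1) : 0 < (1 + r • (stdMat A * stdMat B)).det := by
  have hne : ∀ s ∈ Set.Icc 0 r, (1 + s • (stdMat A * stdMat B)).det ≠ 0 := by
    intro s hs h0
    obtain ⟨x, hx, h⟩ := Matrix.exists_mulVec_eq_zero_iff.2 h0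
    have hcomp : ∀ C : Euc n →L[ℝ] Euc n, ∀ y : Euc n, C y = WithLp.toLp 2 ((stdMat C).mulVec y.ofLp) := by
      intro C y
      have := LinearMap.toMatrix_mulVec_repr (EuclideanSpace.basisFun (Fin n) ℝ).toBasis
        (EuclideanSpace.basisFun (Fin n) ℝ).toBasis (C : Euc n →ₗ[ℝ] Euc n) y
      ext i
      have h2 := congrFun this i
      have h3 : ⇑((EuclideanSpace.basisFun (Fin n) ℝ).toBasis.repr y) = y.ofLp := by
        ext k; simp
      rw [h3] at h2
      simpa [stdMat] using h2.symm
    set y : Euc n := WithLp.toLp 2 x with hy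
    have hy0 : y ≠ 0 := by
      intro h'; apply hx
      have := congrArg WithLp.ofLp h'
      simpa [hy] using this
    have hkey : y + s • A (B y) = 0 := by
      rw [hcomp B y, hcomp A]
      have : (1 + s • (stdMat A * stdMat B)).mulVec x
          = x + s • ((stdMat A).mulVec ((stdMat B).mulVec x)) := by
        rw [Matrix.add_mulVec, Matrix.one_mulVec, Matrix.smul_mulVec, Matrix.mulVec_mulVec]
      rw [this] at h
      ext i
      simpa [hy] using congrFun h i
    have h1 : ‖y‖ ≤ s * ‖y‖ := by
      have : y = -(s • A (B y)) := eq_neg_of_add_eq_zero_left hkey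
      calc ‖y‖ = ‖s • A (B y)‖ := by conv_lhs => rw [this]; rw [norm_neg]
        _ = s * ‖A (B y)‖ := by rw [norm_smul, Real.norm_of_nonneg hs.1]
        _ ≤ s * ‖y‖ := by
          gcongr
          · exact hs.1
          calc ‖A (B y)‖ ≤ 1 * ‖B y‖ := A.le_of_opNorm_le hA _
            _ ≤ 1 * (1 * ‖y‖) := by gcongr; exact B.le_of_opNorm_le hB _
            _ = ‖y‖ := by ring
    have : 0 < ‖y‖ := norm_pos_iff.2 hy0
    nlinarith [hs.2]
  by_contra hcon
  have hc : ContinuousOn (fun s : ℝ => (1 + s • (stdMat A * stdMat B)).det) (Set.Icc 0 r) := by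
    apply Continuous.continuousOn
    fun_prop
  have := intermediate_value_Icc' hr0 hc
  obtain ⟨s, hs, h⟩ := this ⟨not_lt.1 hcon, by simp⟩
  exact hne s hs h

/-! ### Holomorphic parameter integrals and the twist map -/

/-- An integral depending holomorphically on a parameter is holomorphic as soon as the integrand is
locally dominated; the bound on the derivative comes from Cauchy's estimate. -/
lemma differentiableOn_integral_of_bound {α : Type*} [MeasurableSpace α] {μ : Measure α}
    {U : Set ℂ} (G : ℂ → α → ℂ)
    (hmeas : ∀ κ, AEStronglyMeasurable (G κ) μ) (hdiff : ∀ a, Differentiable ℂ fun κ => G κ a)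
    (hb : ∀ κ₀ ∈ U, ∃ r > 0, ∃ bound : α → ℝ, Integrable bound μ ∧
      ∀ κ ∈ Metric.ball κ₀ r, ∀ a, ‖G κ a‖ ≤ bound a) :
    DifferentiableOn ℂ (fun κ => ∫ a, G κ a ∂μ) U := by
  intro κ₀ hκ₀
  obtain ⟨r, hr, bound, hbi, hbd⟩ := hb κ₀ hκ₀
  have hF' : AEStronglyMeasurable (fun a => deriv (fun κ => G κ a) κ₀) μ := by
    let t : ℕ → ℂ := fun k => ((k : ℂ) + 1)⁻¹
    have ht : Filter.Tendsto t Filter.atTop (nhdsWithin 0 {0}ᶜ) := by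
      refine tendsto_nhdsWithin_iff.2 ⟨?_, Filter.Eventually.of_forall fun k => ?_⟩
      · have := tendsto_one_div_add_atTop_nhds_zero_nat (𝕜 := ℂ)
        simpa [t] using this
      · have : (k : ℂ) + 1 ≠ 0 := by exact_mod_cast Nat.succ_ne_zero k
        simpa [t] using this
    refine aestronglyMeasurable_of_tendsto_ae Filter.atTop
      (f := fun k a => (t k)⁻¹ • (G (κ₀ + t k) a - G κ₀ a))
      (fun k => ((hmeas (κ₀ + t k)).sub (hmeas κ₀)).const_smul (t k)⁻¹) (Filter.Eventually.of_forall fun a => ?_)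
    exact ((hdiff a κ₀).hasDerivAt.tendsto_slope_zero).comp ht
  have key := hasDerivAt_integral_of_dominated_loc_of_deriv_le (μ := μ) (𝕜 := ℂ)
    (F := G) (F' := fun κ a => deriv (fun κ => G κ a) κ) (x₀ := κ₀)
    (s := Metric.ball κ₀ (r / 2)) (bound := fun a => bound a / (r / 2))
    (Metric.ball_mem_nhds _ (by positivity))
    (Filter.Eventually.of_forall hmeas)
    (hbi.mono' (hmeas κ₀) (Filter.Eventually.of_forall fun a =>
      hbd κ₀ (Metric.mem_ball_self hr) a)) hF'
    (Filter.Eventually.of_forall fun a κ hκ => ?_) (hbi.div_const _)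
    (Filter.Eventually.of_forall fun a κ _ => (hdiff a κ).hasDerivAt)
  · exact key.2.differentiableAt.differentiableWithinAt
  · refine Complex.norm_deriv_le_of_forall_mem_sphere_norm_le (by positivity)
      (hdiff a).diffContOnCl fun z hz => ?_
    -- the circle of radius `r / 2` about `κ` stays in the ball where the bound holds
    have hzr : z ∈ Metric.ball κ₀ r := by
      rw [Metric.mem_sphere] at hz
      rw [Metric.mem_ball] at hκ ⊢
      linarith [dist_triangle z κ κ₀]
    exact hbd z hzr a

/-- A Lipschitz map between normed spaces of the same finite dimension maps null sets to null
sets. -/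
lemma null_image_of_lipschitz {F : Type*} [NormedAddCommGroup F] [NormedSpace ℝ F]
    [FiniteDimensional ℝ F] [MeasurableSpace F] [BorelSpace F] (μ : Measure F)
    [μ.IsAddHaarMeasure] {C : NNReal} {f : F → F} (hf : LipschitzWith C f) {s : Set F}
    (hs : μ s = 0) : μ (f '' s) = 0 := by
  let d : ℝ := Module.finrank ℝ F
  have h1 : μ ≪ (Measure.hausdorffMeasure d : Measure F) :=
    Measure.absolutelyContinuous_isAddHaarMeasure _ _
  have h2 : (Measure.hausdorffMeasure d : Measure F) ≪ μ :=
    Measure.absolutelyContinuous_isAddHaarMeasure _ _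
  apply h1
  have h3 := hf.hausdorffMeasure_image_le (d := d) (by positivity) s
  rw [h2 hs, mul_zero] at h3
  exact le_antisymm h3 bot_le

instance isAddHaarMeasure_volume_prod (n : ℕ) :
    (volume : Measure (Euc n × Euc n)).IsAddHaarMeasure :=
  inferInstanceAs (((volume : Measure (Euc n)).prod volume).IsAddHaarMeasure)

section Reflection
variable {n : ℕ} {R : Euc n → Euc n}

/-- The set of pairs of points of differentiability of `R`. -/
def diffSet {n : ℕ} (R : Euc n → Euc n) : Set (Euc n × Euc n) :=
  {z | DifferentiableAt ℝ R z.1 ∧ DifferentiableAt ℝ R z.2}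

lemma measurableSet_diffSet {n : ℕ} (R : Euc n → Euc n) : MeasurableSet (diffSet R) :=
  (measurableSet_of_differentiableAt ℝ R |>.preimage measurable_fst).inter
    (measurableSet_of_differentiableAt ℝ R |>.preimage measurable_snd)

lemma ae_mem_diffSet (hR : LipschitzWith 1 R) : ∀ᵐ z : Euc n × Euc n, z ∈ diffSet R := by
  have h := hR.ae_differentiableAt (μ := volume)
  have h1 : ∀ᵐ z : Euc n × Euc n, DifferentiableAt ℝ R z.1 :=
    Measure.quasiMeasurePreserving_fst.ae h
  have h2 : ∀ᵐ z : Euc n × Euc n, DifferentiableAt ℝ R z.2 :=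
    Measure.quasiMeasurePreserving_snd.ae h
  filter_upwards [h1, h2] with z a b using ⟨a, b⟩

/-- The map `(u, v) ↦ (u + p R(v), v + q R(u))`. -/
def twist {n : ℕ} (R : Euc n → Euc n) (p q : ℝ) (z : Euc n × Euc n) : Euc n × Euc n :=
  (z.1 + p • R z.2, z.2 + q • R z.1)

lemma hasFDerivAt_twist {p q : ℝ} {z : Euc n × Euc n} (hz : z ∈ diffSet R) :
    HasFDerivAt (twist R p q) (blockMap p q (fderiv ℝ R z.1) (fderiv ℝ R z.2)) z := by
  refine HasFDerivAt.prodMk ?_ ?_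
  · exact hasFDerivAt_fst.add ((hz.2.hasFDerivAt.comp z hasFDerivAt_snd).const_smul p)
  · exact hasFDerivAt_snd.add ((hz.1.hasFDerivAt.comp z hasFDerivAt_fst).const_smul q)

lemma lipschitz_twist (hR : LipschitzWith 1 R) (p q : ℝ) :
    ∃ C, LipschitzWith C (twist R p q) := by
  have h1 : LipschitzWith 1 (fun z : Euc n × Euc n => R z.2) := by
    have := hR.comp (LipschitzWith.prod_snd (α := Euc n) (β := Euc n))
    rwa [mul_one] at this
  have h2 : LipschitzWith 1 (fun z : Euc n × Euc n => R z.1) := by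
    have := hR.comp (LipschitzWith.prod_fst (α := Euc n) (β := Euc n))
    rwa [mul_one] at this
  exact ⟨_, (LipschitzWith.prod_fst.add ((lipschitzWith_smul p).comp h1)).prodMk
    (LipschitzWith.prod_snd.add ((lipschitzWith_smul q).comp h2))⟩

lemma injective_twist (hR : LipschitzWith 1 R) {p q : ℝ} (hp : |p| < 1) (hq : |q| < 1) :
    Function.Injective (twist R p q) := by
  rintro ⟨u, v⟩ ⟨u', v'⟩ h
  simp only [twist, Prod.mk.injEq] at h
  obtain ⟨h1, h2⟩ := h
  have e1 : u - u' = -(p • (R v - R v')) := by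
    rw [smul_sub]; linear_combination (norm := module) h1
  have e2 : v - v' = -(q • (R u - R u')) := by
    rw [smul_sub]; linear_combination (norm := module) h2
  have d1 : ‖u - u'‖ ≤ |p| * ‖v - v'‖ := by
    rw [e1, norm_neg, norm_smul, Real.norm_eq_abs]
    gcongr; simpa [dist_eq_norm] using hR.dist_le_mul v v'
  have d2 : ‖v - v'‖ ≤ |q| * ‖u - u'‖ := by
    conv_lhs => rw [e2, norm_neg, norm_smul, Real.norm_eq_abs]
    gcongr; simpa [dist_eq_norm] using hR.dist_le_mul u u'
  have n1 := norm_nonneg (u - u')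
  have n2 := norm_nonneg (v - v')
  have z1 : ‖u - u'‖ = 0 := by
    nlinarith [mul_nonneg (abs_nonneg p) n2, mul_nonneg (abs_nonneg q) n1]
  have z2 : ‖v - v'‖ = 0 := by
    rw [z1] at d2; linarith
  rw [norm_sub_eq_zero_iff] at z1 z2
  rw [z1, z2]

lemma surjective_twist (hR : LipschitzWith 1 R) {p q : ℝ} (hp : |p| < 1) (hq : |q| < 1) :
    Function.Surjective (twist R p q) := by
  rintro ⟨s, t⟩
  -- solve `u = s - p R(t - q R(u))` by the contraction principle
  have hL : LipschitzWith (‖p‖₊ * (1 * (‖q‖₊ * 1)))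
      (fun u : Euc n => s - p • R (t - q • R u)) := by
    have a1 : LipschitzWith (‖q‖₊ * 1) (fun u : Euc n => t - q • R u) := by
      have : LipschitzWith (‖q‖₊ * 1) (fun u : Euc n => q • R u) :=
        (lipschitzWith_smul q).comp hR
      simpa using (LipschitzWith.const t).sub this
    have a2 : LipschitzWith (‖p‖₊ * (1 * (‖q‖₊ * 1)))
        (fun u : Euc n => p • R (t - q • R u)) :=
      (lipschitzWith_smul p).comp (hR.comp a1)
    simpa using (LipschitzWith.const s).sub a2
  have hc : ContractingWith (‖p‖₊ * (1 * (‖q‖₊ * 1)))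
      (fun u : Euc n => s - p • R (t - q • R u)) := by
    refine ⟨?_, hL⟩
    rw [← NNReal.coe_lt_coe]
    simp only [one_mul, mul_one, NNReal.coe_mul, coe_nnnorm, Real.norm_eq_abs, NNReal.coe_one]
    nlinarith [abs_nonneg p, abs_nonneg q]
  have hfix : s - p • R (t - q • R (hc.fixedPoint _)) = hc.fixedPoint _ :=
    hc.fixedPoint_isFixedPt
  set u := hc.fixedPoint (fun u : Euc n => s - p • R (t - q • R u))
  refine ⟨(u, t - q • R u), ?_⟩
  simp only [twist, Prod.mk.injEq]
  constructor
  · conv_lhs => enter [1]; rw [← hfix]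
    abel
  · abel

/-- Change of variables along `twist` when it is bijective. -/
lemma integral_twist (hR : LipschitzWith 1 R) {p q : ℝ} (hp : |p| < 1) (hq : |q| < 1)
    (g : Euc n × Euc n → ℂ) :
    ∫ z, g z = ∫ z, |(blockMap p q (fderiv ℝ R z.1) (fderiv ℝ R z.2)).det| • g (twist R p q z) := by
  have h := integral_image_eq_integral_abs_det_fderiv_smul (volume : Measure (Euc n × Euc n))
    (measurableSet_diffSet R) (f := twist R p q)
    (f' := fun z => blockMap p q (fderiv ℝ R z.1) (fderiv ℝ R z.2))
    (fun z hz => (hasFDerivAt_twist hz).hasFDerivWithinAt)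
    (injective_twist hR hp hq).injOn g
  have hae : diffSet R =ᵐ[volume] Set.univ := by
    rw [Filter.eventuallyEq_univ]; exact ae_mem_diffSet hR
  have himg : twist R p q '' diffSet R =ᵐ[volume] Set.univ := by
    rw [Filter.eventuallyEq_univ, mem_ae_iff]
    have hc : volume ((diffSet R)ᶜ) = 0 := ae_mem_diffSet hR
    obtain ⟨C, hC⟩ := lipschitz_twist hR p q
    have := null_image_of_lipschitz volume hC hc
    refine measure_mono_null ?_ this
    intro y hy
    obtain ⟨z, rfl⟩ := surjective_twist hR hp hq y
    exact ⟨z, fun hz => hy ⟨z, hz, rfl⟩, rfl⟩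
  rw [setIntegral_congr_set himg, setIntegral_congr_set hae, setIntegral_univ,
    setIntegral_univ] at h
  exact h

end Reflection

/-! ### Analytic continuation of a Gaussian integral -/

section Kuperberg
variable {n : ℕ} {R : Euc n → Euc n}

/-- The squared norm of `twist R (-κ) κ z`, continued to complex `κ`. -/
def brak (R : Euc n → Euc n) (κ : ℂ) (z : Euc n × Euc n) : ℂ :=
  ((‖z.1‖ ^ 2 + ‖z.2‖ ^ 2 : ℝ) : ℂ) + κ ^ 2 * ((‖R z.1‖ ^ 2 + ‖R z.2‖ ^ 2 : ℝ) : ℂ)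
    + 2 * κ * ((⟪z.2, R z.1⟫ - ⟪z.1, R z.2⟫ : ℝ) : ℂ)

/-- The Gaussian density pulled back along `twist R (-κ) κ`, continued to complex `κ`. -/
def gaussTwist (R : Euc n → Euc n) (κ : ℂ) (z : Euc n × Euc n) : ℂ :=
  Complex.exp (-brak R κ z) * jac (κ ^ 2) (fderiv ℝ R z.1) (fderiv ℝ R z.2)

lemma norm_map_le (hR : LipschitzWith 1 R) (hR0 : R 0 = 0) (u : Euc n) : ‖R u‖ ≤ ‖u‖ := by
  simpa [hR0] using hR.dist_le_mul u 0

lemma brak_ofReal (κ : ℝ) (z : Euc n × Euc n) :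
    brak R κ z = ((‖(twist R (-κ) κ z).1‖ ^ 2 + ‖(twist R (-κ) κ z).2‖ ^ 2 : ℝ) : ℂ) := by
  have h1 : ‖z.1 + (-κ) • R z.2‖ ^ 2 = ‖z.1‖ ^ 2 - 2 * κ * ⟪z.1, R z.2⟫ + κ ^ 2 * ‖R z.2‖ ^ 2 := by
    rw [norm_add_sq_real, inner_smul_right, norm_smul, mul_pow, Real.norm_eq_abs, sq_abs]; ring
  have h2 : ‖z.2 + κ • R z.1‖ ^ 2 = ‖z.2‖ ^ 2 + 2 * κ * ⟪z.2, R z.1⟫ + κ ^ 2 * ‖R z.1‖ ^ 2 := by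
    rw [norm_add_sq_real, inner_smul_right, norm_smul, mul_pow, Real.norm_eq_abs, sq_abs]; ring
  simp only [brak, twist, h1, h2]
  push_cast
  ring

lemma re_brak (κ : ℂ) (z : Euc n × Euc n) :
    (brak R κ z).re = ‖z.1‖ ^ 2 + ‖z.2‖ ^ 2
      + (κ.re ^ 2 - κ.im ^ 2) * (‖R z.1‖ ^ 2 + ‖R z.2‖ ^ 2)
      + 2 * κ.re * (⟪z.2, R z.1⟫ - ⟪z.1, R z.2⟫) := by
  have h : κ ^ 2 = ⟨κ.re ^ 2 - κ.im ^ 2, 2 * κ.re * κ.im⟩ := by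
    apply Complex.ext <;> simp [sq]; ring
  rw [brak, h]
  simp only [Complex.add_re, Complex.re_mul_ofReal, Complex.ofReal_re]
  simp

/-- On the diamond `|Re κ| + |Im κ| < 1` the exponent stays coercive, because `R` does not
increase norms. -/
lemma le_re_brak (hR : LipschitzWith 1 R) (hR0 : R 0 = 0) {κ : ℂ} {ρ : ℝ} (hρ : ρ ≤ 1)
    (hκ : |κ.re| + |κ.im| ≤ ρ) (z : Euc n × Euc n) :
    (1 - ρ) ^ 2 * (‖z.1‖ ^ 2 + ‖z.2‖ ^ 2) ≤ (brak R κ z).re := by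
  rw [re_brak, ← sq_abs κ.re, ← sq_abs κ.im]
  set a := |κ.re|
  set b := |κ.im|
  have ha : 0 ≤ a := abs_nonneg _
  have hb : 0 ≤ b := abs_nonneg _
  set N := ‖z.1‖ ^ 2 + ‖z.2‖ ^ 2 with hN
  set M := ‖R z.1‖ ^ 2 + ‖R z.2‖ ^ 2 with hM
  set X := ⟪z.2, R z.1⟫ - ⟪z.1, R z.2⟫ with hX
  have hMN : M ≤ N := by
    have h1 := norm_map_le hR hR0 z.1
    have h2 := norm_map_le hR hR0 z.2
    simp only [hM, hN]; gcongr
  have hN0 : 0 ≤ N := by positivity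
  have hM0 : 0 ≤ M := by positivity
  have hX2 : 2 * |X| ≤ N + M := by
    have h1 : |X| ≤ ‖z.2‖ * ‖R z.1‖ + ‖z.1‖ * ‖R z.2‖ :=
      (abs_sub _ _).trans (add_le_add (abs_real_inner_le_norm _ _) (abs_real_inner_le_norm _ _))
    nlinarith [sq_nonneg (‖z.2‖ - ‖R z.1‖), sq_nonneg (‖z.1‖ - ‖R z.2‖)]
  have h1 : -(a * (N + M)) ≤ 2 * κ.re * X := by
    have : |2 * κ.re * X| = a * (2 * |X|) := by
      rw [abs_mul, abs_mul, abs_two]; ring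
    have h2 := neg_abs_le (2 * κ.re * X)
    rw [this] at h2
    nlinarith [mul_le_mul_of_nonneg_left hX2 ha]
  have h2 : (a + b ^ 2 - a ^ 2) * M ≤ (a + b ^ 2 - a ^ 2) * N :=
    mul_le_mul_of_nonneg_left hMN (by nlinarith)
  have h3 : (1 - ρ) ^ 2 ≤ (1 - a - b) * (1 - a + b) := by nlinarith
  nlinarith [mul_le_mul_of_nonneg_right h3 hN0]

/-- The crude bound from Leibniz' formula; it only serves integrability. -/
lemma norm_jac_le {w : ℂ} (hw : ‖w‖ ≤ 1) {A B : Euc n →L[ℝ] Euc n} (hA : ‖A‖ ≤ 1) (hB : ‖B‖ ≤ 1) :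
    ‖jac w A B‖ ≤ n.factorial * (1 + n : ℝ) ^ n := by
  have h := Matrix.det_le (A := 1 + w • (stdMat A * stdMat B).map (algebraMap ℝ ℂ))
    (abv := (⟨⟨norm, norm_mul⟩, norm_nonneg, fun _ => norm_eq_zero, norm_add_le⟩ : AbsoluteValue ℂ ℝ)) (x := (1 + n : ℝ)) ?_
  · rw [nsmul_eq_mul, Fintype.card_fin] at h
    exact h
  intro i j
  change ‖(1 + w • (stdMat A * stdMat B).map (algebraMap ℝ ℂ)) i j‖ ≤ _
  have h1 : ‖(1 : Matrix (Fin n) (Fin n) ℂ) i j‖ ≤ 1 := by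
    rw [Matrix.one_apply]; split_ifs <;> simp
  have h2 : |(stdMat A * stdMat B) i j| ≤ n := by
    rw [Matrix.mul_apply]
    refine (Finset.abs_sum_le_sum_abs _ _).trans ?_
    calc _ ≤ ∑ k : Fin n, (1 : ℝ) := by
          gcongr with k
          rw [abs_mul]
          exact mul_le_one₀ (abs_stdMat_le hA i k) (abs_nonneg _)
            (abs_stdMat_le hB k j)
      _ = n := by simp
  rw [Matrix.add_apply, Matrix.smul_apply, Matrix.map_apply]
  refine (norm_add_le _ _).trans (add_le_add h1 ?_)
  rw [smul_eq_mul, norm_mul]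
  calc _ ≤ 1 * (n : ℝ) := by
        gcongr
        simpa using h2
    _ = n := one_mul _

lemma norm_fderiv_le_one (hR : LipschitzWith 1 R) (u : Euc n) : ‖fderiv ℝ R u‖ ≤ 1 := by
  simpa using norm_fderiv_le_of_lipschitz ℝ hR (x₀ := u)

lemma continuous_jac : Continuous fun p : ℂ × (Euc n →L[ℝ] Euc n) × (Euc n →L[ℝ] Euc n) =>
    jac p.1 p.2.1 p.2.2 := by
  unfold jac
  refine Continuous.matrix_det ?_
  refine continuous_const.add (continuous_fst.smul ?_)
  refine Continuous.matrix_map ?_ (by exact Complex.continuous_ofReal)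
  exact (continuous_stdMat.comp (by fun_prop)).matrix_mul (continuous_stdMat.comp (by fun_prop))

lemma measurable_jac_fderiv (w : ℂ) :
    Measurable fun z : Euc n × Euc n => jac w (fderiv ℝ R z.1) (fderiv ℝ R z.2) := by
  have h : ∀ i j, Measurable fun u : Euc n => stdMat (fderiv ℝ R u) i j := fun i j =>
    (((continuous_apply j).comp ((continuous_apply i).comp continuous_stdMat)).measurable).comp
      (measurable_fderiv ℝ R)
  have h1 : ∀ i j, Measurable fun z : Euc n × Euc n => stdMat (fderiv ℝ R z.1) i j :=
    fun i j => (h i j).comp measurable_fst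
  have h2 : ∀ i j, Measurable fun z : Euc n × Euc n => stdMat (fderiv ℝ R z.2) i j :=
    fun i j => (h i j).comp measurable_snd
  unfold jac
  simp only [Matrix.det_apply, Matrix.add_apply, Matrix.smul_apply, smul_eq_mul,
    Matrix.map_apply, Matrix.mul_apply]
  refine Finset.measurable_sum _ fun σ _ => Measurable.const_smul ?_ _
  refine Finset.measurable_prod _ fun i _ => Measurable.const_add (Measurable.const_mul ?_ _) _
  have h3 : Measurable fun z : Euc n × Euc n =>
      ∑ k, stdMat (fderiv ℝ R z.1) (σ i) k * stdMat (fderiv ℝ R z.2) k i :=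
    Finset.measurable_sum _ fun k _ => (h1 _ _).mul (h2 _ _)
  exact Complex.measurable_ofReal.comp h3

lemma continuous_brak (hR : LipschitzWith 1 R) (κ : ℂ) : Continuous (brak R κ) := by
  have := hR.continuous
  unfold brak
  fun_prop

lemma measurable_gaussTwist (hR : LipschitzWith 1 R) (κ : ℂ) : Measurable (gaussTwist R κ) :=
  ((Complex.continuous_exp.comp (continuous_brak hR κ).neg).measurable).mul
    (measurable_jac_fderiv _)

lemma differentiable_gaussTwist (z : Euc n × Euc n) :
    Differentiable ℂ fun κ => gaussTwist R κ z := by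
  have hj : Differentiable ℂ fun w : ℂ => jac w (fderiv ℝ R z.1) (fderiv ℝ R z.2) := by
    unfold jac
    simp only [Matrix.det_apply]
    refine Differentiable.fun_sum fun σ _ => ?_
    refine Differentiable.const_smul ?_ _
    refine Differentiable.fun_finsetProd fun i _ => ?_
    simp only [Matrix.add_apply, Matrix.smul_apply, smul_eq_mul]
    fun_prop
  unfold gaussTwist
  refine Differentiable.mul ?_ (hj.comp (by fun_prop))
  unfold brak
  fun_prop

lemma integrable_gauss_prod {c : ℝ} (hc : 0 < c) :
    Integrable fun z : Euc n × Euc n => Real.exp (-(c * (‖z.1‖ ^ 2 + ‖z.2‖ ^ 2))) := by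
  have h : Integrable fun u : Euc n => Real.exp (-c * ‖u‖ ^ 2) := by
    have := GaussianFourier.integrable_cexp_neg_mul_sq_norm_add (b := c) (by simpa using hc) 0
      (0 : Euc n)
    have := this.norm
    refine this.congr (Filter.Eventually.of_forall fun u => ?_)
    simp only [Complex.norm_exp, zero_mul, add_zero]
    congr 1
    norm_cast
  refine (h.mul_prod h).congr (Filter.Eventually.of_forall fun z => ?_)
  simp only [← Real.exp_add]
  congr 1; ring

lemma norm_gaussTwist_le (hR : LipschitzWith 1 R) (hR0 : R 0 = 0) {κ : ℂ} {ρ : ℝ} (hρ : ρ ≤ 1)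
    (hκ : |κ.re| + |κ.im| ≤ ρ) (z : Euc n × Euc n) :
    ‖gaussTwist R κ z‖ ≤ Real.exp (-((1 - ρ) ^ 2 * (‖z.1‖ ^ 2 + ‖z.2‖ ^ 2))) *
      (n.factorial * (1 + n : ℝ) ^ n) := by
  rw [gaussTwist, norm_mul, Complex.norm_exp, Complex.neg_re]
  have h1 := le_re_brak hR hR0 hρ hκ z
  have hk : ‖κ ^ 2‖ ≤ 1 := by
    rw [norm_pow]
    exact pow_le_one₀ (norm_nonneg _) ((Complex.norm_le_abs_re_add_abs_im κ).trans (hκ.trans hρ))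
  have h2 := norm_jac_le hk (norm_fderiv_le_one hR z.1) (norm_fderiv_le_one hR z.2)
  gcongr

/-- For real `κ` the integral is the Gaussian integral in the variables `twist R (-κ) κ z`. -/
lemma integral_gaussTwist_ofReal (hR : LipschitzWith 1 R) {κ : ℝ} (hκ : |κ| < 1) :
    ∫ z, gaussTwist R κ z = (Real.pi : ℂ) ^ n := by
  have h := integral_twist hR (p := -κ) (q := κ) (by rwa [abs_neg]) hκ
    (fun z => ((Real.exp (-1 * ‖z.1‖ ^ 2) * Real.exp (-1 * ‖z.2‖ ^ 2) : ℝ) : ℂ))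
  rw [show (∫ z : Euc n × Euc n, ((Real.exp (-1 * ‖z.1‖ ^ 2) * Real.exp (-1 * ‖z.2‖ ^ 2) : ℝ) : ℂ))
    = ((∫ z : Euc n × Euc n, Real.exp (-1 * ‖z.1‖ ^ 2) * Real.exp (-1 * ‖z.2‖ ^ 2) : ℝ) : ℂ)
    from integral_ofReal] at h
  have hv : (∫ z : Euc n × Euc n, Real.exp (-1 * ‖z.1‖ ^ 2) * Real.exp (-1 * ‖z.2‖ ^ 2))
      = Real.pi ^ n := by
    have := integral_prod_mul (μ := (volume : Measure (Euc n))) (ν := (volume : Measure (Euc n)))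
      (fun u : Euc n => Real.exp (-1 * ‖u‖ ^ 2)) (fun u : Euc n => Real.exp (-1 * ‖u‖ ^ 2))
    rw [Measure.volume_eq_prod, this, GaussianFourier.integral_rexp_neg_mul_sq_norm one_pos,
      ← Real.rpow_add (by positivity), finrank_euclideanSpace, Fintype.card_fin, div_one,
      add_halves, Real.rpow_natCast]
  rw [hv] at h
  push_cast at h
  rw [h]
  refine integral_congr_ae (Filter.Eventually.of_forall fun z => ?_)
  have hκ2 : κ ^ 2 < 1 := by rw [← sq_abs]; nlinarith [abs_nonneg κ]
  have hd := det_pos_of_small (norm_fderiv_le_one hR z.1) (norm_fderiv_le_one hR z.2)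
    (sq_nonneg κ) hκ2
  have hj := jac_ofReal (κ ^ 2) (fderiv ℝ R z.1) (fderiv ℝ R z.2)
  simp only [gaussTwist, brak_ofReal]
  rw [show (κ : ℂ) ^ 2 = ((κ ^ 2 : ℝ) : ℂ) by push_cast; rfl, hj, det_blockMap,
    show (1 : Matrix (Fin n) (Fin n) ℝ) - (-κ * κ) • (stdMat (fderiv ℝ R z.1) *
      stdMat (fderiv ℝ R z.2)) = 1 + κ ^ 2 • (stdMat (fderiv ℝ R z.1) *
      stdMat (fderiv ℝ R z.2)) by rw [sub_eq_add_neg, ← neg_smul]; congr 2; ring,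
    abs_of_pos hd, Complex.real_smul, mul_comm, ← Complex.exp_add]
  congr 2
  push_cast; ring

/-- The integral is constant on the diamond `|Re κ| + |Im κ| < 1`: it is holomorphic there, and
constant for real `κ` by the change of variables. -/
lemma integral_gaussTwist (hR : LipschitzWith 1 R) (hR0 : R 0 = 0) {κ : ℂ}
    (hκ : |κ.re| + |κ.im| < 1) : ∫ z, gaussTwist R κ z = (Real.pi : ℂ) ^ n := by
  let U : Set ℂ := {κ | |κ.re| + |κ.im| < 1}
  have hUo : IsOpen U := isOpen_lt (by fun_prop) continuous_const
  have hUc : Convex ℝ U := by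
    intro x hx y hy a b ha hb hab
    simp only [U, Set.mem_ofPred_eq, Complex.add_re, Complex.add_im, Complex.smul_re,
      Complex.smul_im, smul_eq_mul] at *
    have e1 := abs_add_le (a * x.re) (b * y.re)
    have e2 := abs_add_le (a * x.im) (b * y.im)
    rw [abs_mul, abs_mul, abs_of_nonneg ha, abs_of_nonneg hb] at e1 e2
    obtain rfl : b = 1 - a := by linarith
    rcases ha.eq_or_lt with rfl | ha'
    · simp at *; linarith
    nlinarith [mul_lt_mul_of_pos_left hx ha', mul_le_mul_of_nonneg_left hy.le hb]
  have hd : DifferentiableOn ℂ (fun κ => ∫ z, gaussTwist R κ z) U := by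
    refine differentiableOn_integral_of_bound _
      (fun κ => (measurable_gaussTwist hR κ).aestronglyMeasurable) differentiable_gaussTwist ?_
    intro κ₀ hκ₀
    set ρ := |κ₀.re| + |κ₀.im| with hρ
    have hρ1 : ρ < 1 := hκ₀
    have hc : 0 < (1 - (1 + ρ) / 2) ^ 2 := by
      have : 0 < 1 - (1 + ρ) / 2 := by linarith
      positivity
    refine ⟨(1 - ρ) / 4, by linarith, _, (integrable_gauss_prod hc).mul_const
      (n.factorial * (1 + n : ℝ) ^ n), fun κ hκ z => ?_⟩
    refine norm_gaussTwist_le hR hR0 (by linarith) ?_ z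
    rw [Metric.mem_ball, dist_eq_norm] at hκ
    have r1 := (Complex.abs_re_le_norm (κ - κ₀)).trans hκ.le
    have r2 := (Complex.abs_im_le_norm (κ - κ₀)).trans hκ.le
    rw [Complex.sub_re] at r1
    rw [Complex.sub_im] at r2
    have s1 := abs_sub_abs_le_abs_sub κ.re κ₀.re
    have s2 := abs_sub_abs_le_abs_sub κ.im κ₀.im
    linarith
  have h0 : (0 : ℂ) ∈ U := by simp [U]
  refine (hd.analyticOnNhd hUo).eqOn_of_preconnected_of_frequently_eq
    (g := fun _ => (Real.pi : ℂ) ^ n) analyticOnNhd_const hUc.isPreconnected h0 ?_ hκ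
  -- the real points of the diamond accumulate at `0`
  have ht : Filter.Tendsto (fun k : ℕ => (((1 : ℝ) / ((k : ℝ) + 2) : ℝ) : ℂ)) Filter.atTop
      (nhdsWithin 0 {0}ᶜ) := by
    refine tendsto_nhdsWithin_iff.2 ⟨?_, Filter.Eventually.of_forall fun k => ?_⟩
    · have h1 : Filter.Tendsto (fun k : ℕ => (1 : ℝ) / ((k : ℝ) + 2)) Filter.atTop (nhds 0) :=
        tendsto_const_nhds.div_atTop
          (Filter.tendsto_atTop_add_const_right _ _ tendsto_natCast_atTop_atTop)
      have := (Complex.continuous_ofReal.tendsto 0).comp h1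
      rwa [Complex.ofReal_zero] at this
    · have : (1 : ℝ) / ((k : ℝ) + 2) ≠ 0 := by positivity
      exact Complex.ofReal_ne_zero.2 this
  refine ht.frequently (Filter.Frequently.of_forall fun k => ?_)
  apply integral_gaussTwist_ofReal hR
  rw [abs_of_pos (by positivity), div_lt_one (by positivity)]
  have : (0 : ℝ) ≤ k := Nat.cast_nonneg k
  linarith

/-- The outcome of the analytic continuation. At `κ = -i τ` one has `κ ^ 2 = -τ ^ 2`, and the
triangle inequality bounds `π ^ n` by the integral of the modulus, in which the mixed terms of the
exponent disappear; then `τ → 1` by dominated convergence. -/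
lemma pi_pow_le_integral_det (hR : LipschitzWith 1 R) (hR0 : R 0 = 0)
    (hI : Integrable fun u : Euc n => Real.exp (-(‖u‖ ^ 2 - ‖R u‖ ^ 2))) :
    Integrable (fun z : Euc n × Euc n => Real.exp (-(‖z.1‖ ^ 2 - ‖R z.1‖ ^ 2
      + (‖z.2‖ ^ 2 - ‖R z.2‖ ^ 2))) *
      |(blockMap 1 1 (fderiv ℝ R z.1) (fderiv ℝ R z.2)).det|) ∧
    Real.pi ^ n ≤ ∫ z : Euc n × Euc n, Real.exp (-(‖z.1‖ ^ 2 - ‖R z.1‖ ^ 2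
      + (‖z.2‖ ^ 2 - ‖R z.2‖ ^ 2))) *
      |(blockMap 1 1 (fderiv ℝ R z.1) (fderiv ℝ R z.2)).det| := by
  let F : ℝ → Euc n × Euc n → ℝ := fun τ z => Real.exp (-(‖z.1‖ ^ 2 + ‖z.2‖ ^ 2
      - τ ^ 2 * (‖R z.1‖ ^ 2 + ‖R z.2‖ ^ 2))) *
      ‖jac (-(τ : ℂ) ^ 2) (fderiv ℝ R z.1) (fderiv ℝ R z.2)‖
  have hRc := hR.continuous
  have hFm : ∀ τ, Measurable (F τ) := fun τ =>
    Measurable.mul (by fun_prop) (measurable_jac_fderiv _).norm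
  have hF1 : ∀ z, F 1 z = Real.exp (-(‖z.1‖ ^ 2 - ‖R z.1‖ ^ 2
      + (‖z.2‖ ^ 2 - ‖R z.2‖ ^ 2))) *
      |(blockMap 1 1 (fderiv ℝ R z.1) (fderiv ℝ R z.2)).det| := by
    intro z
    have hj := jac_ofReal (-1) (fderiv ℝ R z.1) (fderiv ℝ R z.2)
    simp only [F]
    rw [show (-((1 : ℝ) : ℂ) ^ 2) = ((-1 : ℝ) : ℂ) by push_cast; ring, hj, det_blockMap,
      Complex.norm_real, Real.norm_eq_abs]
    congr 2
    · ring_nf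
    · rw [one_mul, neg_smul, sub_eq_add_neg]
  have hbd : ∀ τ : ℝ, 0 ≤ τ → τ ≤ 1 → ∀ z, F τ z ≤ Real.exp (-(‖z.1‖ ^ 2 - ‖R z.1‖ ^ 2)) *
      Real.exp (-(‖z.2‖ ^ 2 - ‖R z.2‖ ^ 2)) * (n.factorial * (1 + n : ℝ) ^ n) := by
    intro τ h0 h1 z
    have hw : ‖(-(τ : ℂ) ^ 2)‖ ≤ 1 := by
      rw [norm_neg, norm_pow, Complex.norm_real, Real.norm_eq_abs, abs_of_nonneg h0]
      exact pow_le_one₀ h0 h1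
    have h2 := norm_jac_le hw (norm_fderiv_le_one hR z.1) (norm_fderiv_le_one hR z.2)
    have h3 : τ ^ 2 ≤ 1 := pow_le_one₀ h0 h1
    rw [← Real.exp_add]
    refine mul_le_mul (Real.exp_le_exp.2 ?_) h2 (norm_nonneg _) (Real.exp_pos _).le
    nlinarith [sq_nonneg ‖R z.1‖, sq_nonneg ‖R z.2‖]
  have hBi : Integrable fun z : Euc n × Euc n => Real.exp (-(‖z.1‖ ^ 2 - ‖R z.1‖ ^ 2)) *
      Real.exp (-(‖z.2‖ ^ 2 - ‖R z.2‖ ^ 2)) * (n.factorial * (1 + n : ℝ) ^ n) :=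
    (hI.mul_prod hI).mul_const _
  have hF0 : ∀ τ z, 0 ≤ F τ z := fun τ z => by positivity
  have hFi : ∀ τ : ℝ, 0 ≤ τ → τ ≤ 1 → Integrable (F τ) := fun τ h0 h1 =>
    hBi.mono' (hFm τ).aestronglyMeasurable (Filter.Eventually.of_forall fun z => by
      rw [Real.norm_eq_abs, abs_of_nonneg (hF0 τ z)]; exact hbd τ h0 h1 z)
  simp only [← hF1]
  refine ⟨hFi 1 zero_le_one le_rfl, ?_⟩
  let t : ℕ → ℝ := fun k => 1 - 1 / ((k : ℝ) + 1)
  have ht : Filter.Tendsto t Filter.atTop (nhds 1) := by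
    have := (tendsto_one_div_add_atTop_nhds_zero_nat (𝕜 := ℝ)).const_sub 1
    rwa [sub_zero] at this
  have ht0 : ∀ k, 0 ≤ t k ∧ t k < 1 := by
    intro k
    have h1 : 1 / ((k : ℝ) + 1) ≤ 1 := by
      rw [div_le_one (by positivity)]; linarith [(Nat.cast_nonneg k : (0 : ℝ) ≤ k)]
    have h2 : 0 < 1 / ((k : ℝ) + 1) := by positivity
    exact ⟨by simp only [t]; linarith, by simp only [t]; linarith⟩
  have hlim := tendsto_integral_of_dominated_convergence _
    (F := fun k => F (t k)) (f := F 1) (fun k => (hFm (t k)).aestronglyMeasurable) hBi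
    (fun k => Filter.Eventually.of_forall fun z => by
      rw [Real.norm_eq_abs, abs_of_nonneg (hF0 _ z)]; exact hbd _ (ht0 k).1 (ht0 k).2.le z)
    (Filter.Eventually.of_forall fun z => by
      have hc : Continuous fun τ => F τ z := by
        simp only [F]
        refine Continuous.mul (by fun_prop) (Continuous.norm ?_)
        exact continuous_jac.comp (by fun_prop : Continuous fun τ : ℝ =>
          (-(τ : ℂ) ^ 2, fderiv ℝ R z.1, fderiv ℝ R z.2))
      exact (hc.tendsto 1).comp ht)
  refine ge_of_tendsto' hlim fun k => ?_
  have hk := integral_gaussTwist hR hR0 (κ := -Complex.I * (t k : ℂ))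
    (by simpa [abs_of_nonneg (ht0 k).1] using (ht0 k).2)
  have hn := congrArg norm hk
  rw [norm_pow, Complex.norm_real, Real.norm_eq_abs, abs_of_pos Real.pi_pos] at hn
  rw [← hn]
  refine (norm_integral_le_integral_norm _).trans (le_of_eq ?_)
  refine integral_congr_ae (Filter.Eventually.of_forall fun z => ?_)
  simp only [gaussTwist, F]
  rw [norm_mul, Complex.norm_exp, Complex.neg_re, re_brak]
  have e1 : (-Complex.I * (t k : ℂ)) ^ 2 = -(t k : ℂ) ^ 2 := by
    rw [mul_pow, neg_sq, Complex.I_sq]; ring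
  rw [e1]
  congr 3
  simp
  ring

end Kuperberg

/-! ### Support functions -/

section Support
variable {n : ℕ} {K : Set (Euc n)}

/-- The support function of `K`; it is only used for nonempty compact `K`. -/
def supp (K : Set (Euc n)) (y : Euc n) : ℝ := sSup ((fun x => ⟪x, y⟫) '' K)

lemma isCompact_image_inner (hK : IsCompact K) (y : Euc n) :
    IsCompact ((fun x => ⟪x, y⟫) '' K) := hK.image (by fun_prop)

lemma le_supp (hK : IsCompact K) {x : Euc n} (hx : x ∈ K) (y : Euc n) : ⟪x, y⟫ ≤ supp K y :=
  le_csSup (isCompact_image_inner hK y).bddAbove ⟨x, hx, rfl⟩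

lemma supp_le (hne : K.Nonempty) {y : Euc n} {c : ℝ} (h : ∀ x ∈ K, ⟪x, y⟫ ≤ c) : supp K y ≤ c :=
  csSup_le (hne.image _) (by rintro _ ⟨x, hx, rfl⟩; exact h x hx)

lemma exists_eq_supp (hK : IsCompact K) (hne : K.Nonempty) (y : Euc n) :
    ∃ x ∈ K, ⟪x, y⟫ = supp K y :=
  (isCompact_image_inner hK y).sSup_mem (hne.image _)

lemma supp_smul (hK : IsCompact K) (hne : K.Nonempty) {c : ℝ} (hc : 0 ≤ c) (y : Euc n) :
    supp K (c • y) = c * supp K y := by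
  apply le_antisymm
  · refine supp_le hne fun x hx => ?_
    rw [inner_smul_right]
    exact mul_le_mul_of_nonneg_left (le_supp hK hx y) hc
  · obtain ⟨x, hx, h⟩ := exists_eq_supp hK hne y
    rw [← h, ← inner_smul_right]
    exact le_supp hK hx _

lemma supp_add_le (hK : IsCompact K) (hne : K.Nonempty) (y z : Euc n) :
    supp K (y + z) ≤ supp K y + supp K z := by
  refine supp_le hne fun x hx => ?_
  rw [inner_add_right]
  exact add_le_add (le_supp hK hx y) (le_supp hK hx z)

lemma supp_neg (hK : IsCompact K) (hne : K.Nonempty) (hs : ∀ x ∈ K, -x ∈ K) (y : Euc n) :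
    supp K (-y) = supp K y := by
  have key : ∀ y, supp K (-y) ≤ supp K y := fun y => by
    refine supp_le hne fun x hx => ?_
    rw [inner_neg_right, ← inner_neg_left]
    exact le_supp hK (hs x hx) y
  refine le_antisymm (key y) ?_
  simpa using key (-y)

lemma continuous_supp (hK : IsCompact K) (hne : K.Nonempty) : Continuous (supp K) := by
  obtain ⟨C, hC⟩ := hK.isBounded.exists_norm_le
  have hC0 : 0 ≤ C := (norm_nonneg _).trans (hC _ hne.choose_spec)
  refine (LipschitzWith.of_le_add_mul ⟨C, hC0⟩ fun y z => ?_).continuous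
  have h : supp K y ≤ supp K z + supp K (y - z) := by
    simpa using supp_add_le hK hne z (y - z)
  refine h.trans (add_le_add_right ?_ _)
  refine supp_le hne fun x hx => ?_
  refine (real_inner_le_norm _ _).trans ?_
  rw [dist_eq_norm]
  exact mul_le_mul_of_nonneg_right (hC x hx) (norm_nonneg _)

lemma supp_nonneg (hK : IsCompact K) (h0 : (0 : Euc n) ∈ K) (y : Euc n) : 0 ≤ supp K y := by
  simpa using le_supp hK h0 y

lemma norm_le_supp (hK : IsCompact K) {r : ℝ} (hr : 0 ≤ r)
    (hb : Metric.closedBall (0 : Euc n) r ⊆ K) (y : Euc n) : r * ‖y‖ ≤ supp K y := by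
  rcases eq_or_ne y 0 with rfl | hy
  · have : (0 : Euc n) ∈ K := hb (Metric.mem_closedBall_self hr)
    simpa using supp_nonneg hK this 0
  have hy' : 0 < ‖y‖ := norm_pos_iff.2 hy
  have h := le_supp hK (hb (a := (r / ‖y‖) • y) ?_) y
  · rw [real_inner_smul_left, real_inner_self_eq_norm_sq] at h
    calc r * ‖y‖ = r / ‖y‖ * ‖y‖ ^ 2 := by field_simp
      _ ≤ _ := h
  · rw [mem_closedBall_zero_iff, norm_smul, Real.norm_eq_abs, abs_of_nonneg (by positivity),
      div_mul_cancel₀ _ hy'.ne']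

lemma lintegral_comp_smul (f : Euc n → ℝ≥0∞) {c : ℝ} (hc : 0 < c) :
    ∫⁻ x, f (c • x) = ENNReal.ofReal (c ^ n)⁻¹ * ∫⁻ x, f x := by
  have h := Measure.map_addHaar_smul (volume : Measure (Euc n)) hc.ne'
  have e : MeasurableEmbedding fun x : Euc n => c • x :=
    (Homeomorph.smulOfNeZero c hc.ne').measurableEmbedding
  rw [← e.lintegral_map (μ := volume) f, h, lintegral_smul_measure, finrank_euclideanSpace,
    Fintype.card_fin, abs_of_pos (by positivity), smul_eq_mul]

lemma integrable_exp_neg_norm {c : ℝ} (hc : 0 < c) :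
    Integrable fun u : Euc n => Real.exp (-(c * ‖u‖)) := by
  have h := integrable_one_add_norm (E := Euc n) (μ := volume) (r := (n : ℝ) + 1) (by simp)
  refine (h.const_mul (Real.exp c * (n + 1).factorial / c ^ (n + 1))).mono'
    (Continuous.aestronglyMeasurable (by fun_prop)) (Filter.Eventually.of_forall fun u => ?_)
  rw [Real.norm_eq_abs, Real.abs_exp]
  have h1 := Real.pow_div_factorial_le_exp (c * (1 + ‖u‖)) (by positivity) (n + 1)
  have h2 : (1 + ‖u‖) ^ (-((n : ℝ) + 1)) = ((1 + ‖u‖) ^ (n + 1))⁻¹ := by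
    rw [Real.rpow_neg (by positivity), ← Nat.cast_succ, Real.rpow_natCast]
  have h3 : Real.exp (c * (1 + ‖u‖)) * Real.exp (-(c * ‖u‖)) = Real.exp c := by
    rw [← Real.exp_add]; congr 1; ring
  rw [div_le_iff₀ (by positivity), mul_pow] at h1
  rw [h2, ← div_eq_mul_inv, div_div, le_div_iff₀ (by positivity), ← h3]
  have h4 := mul_le_mul_of_nonneg_left h1 (Real.exp_pos (-(c * ‖u‖))).le
  linarith

end Support

/-! ### Metric projections and the reverse Santaló inequality -/

section Projection
variable {n : ℕ} {R : Euc n → Euc n}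

/-- A 1-Lipschitz map preserving one distance is affine on the segment, so its derivative at the
endpoint maps the one difference to the other. -/
lemma fderiv_of_norm_eq (hR : LipschitzWith 1 R) {u u' : Euc n} (hd : DifferentiableAt ℝ R u)
    (h : ‖R u' - R u‖ = ‖u' - u‖) : fderiv ℝ R u (u' - u) = R u' - R u := by
  have hl : ∀ s ∈ Set.Icc (0 : ℝ) 1, R (u + s • (u' - u)) = R u + s • (R u' - R u) := by
    intro s hs
    have hs1 : 0 ≤ 1 - s := by linarith [hs.2]
    have a1 : dist (R u) (R (u + s • (u' - u))) ≤ s * dist (R u) (R u') := by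
      refine (hR.dist_le_mul _ _).trans (le_of_eq ?_)
      rw [dist_eq_norm', dist_eq_norm' (R u), h, add_sub_cancel_left, norm_smul, Real.norm_eq_abs,
        abs_of_nonneg hs.1]
      simp
    have a2 : dist (R (u + s • (u' - u))) (R u') ≤ (1 - s) * dist (R u) (R u') := by
      refine (hR.dist_le_mul _ _).trans (le_of_eq ?_)
      have : u' - (u + s • (u' - u)) = (1 - s) • (u' - u) := by module
      rw [dist_eq_norm', dist_eq_norm' (R u), h, this, norm_smul, Real.norm_eq_abs,
        abs_of_nonneg hs1]
      simp
    have a3 := dist_triangle (R u) (R (u + s • (u' - u))) (R u')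
    have := eq_lineMap_of_dist_eq_mul_of_dist_eq_mul
      (show dist (R u) (R (u + s • (u' - u))) = s * dist (R u) (R u') by linarith)
      (show dist (R (u + s • (u' - u))) (R u') = (1 - s) * dist (R u) (R u') by linarith)
    rw [this, AffineMap.lineMap_apply_module']
    abel
  have d1 : HasDerivAt (fun s : ℝ => R (u + s • (u' - u))) (fderiv ℝ R u (u' - u)) 0 := by
    have hg : HasDerivAt (fun s : ℝ => u + s • (u' - u)) (u' - u) 0 := by
      simpa using ((hasDerivAt_id (0 : ℝ)).smul_const (u' - u)).const_add u
    have hd' : HasFDerivAt R (fderiv ℝ R u) (u + (0 : ℝ) • (u' - u)) := by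
      simpa using hd.hasFDerivAt
    exact hd'.comp_hasDerivAt (0 : ℝ) hg
  have d2 : HasDerivAt (fun s : ℝ => R u + s • (R u' - R u)) (R u' - R u) 0 := by
    simpa using ((hasDerivAt_id (0 : ℝ)).smul_const (R u' - R u)).const_add (R u)
  have h0 : (0 : ℝ) ∈ Set.Icc (0 : ℝ) 1 := by simp
  refine (uniqueDiffOn_Icc (zero_lt_one' ℝ) 0 h0).eq_deriv _ d1.hasDerivWithinAt
    (d2.hasDerivWithinAt.congr hl (hl 0 h0))

/-- The points where `twist R 1 1` is differentiable with invertible derivative. -/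
def regSet {n : ℕ} (R : Euc n → Euc n) : Set (Euc n × Euc n) :=
  diffSet R ∩ {z | (blockMap 1 1 (fderiv ℝ R z.1) (fderiv ℝ R z.2)).det ≠ 0}

lemma ofReal_det_blockMap_one (A B : Euc n →L[ℝ] Euc n) :
    (((blockMap 1 1 A B).det : ℝ) : ℂ) = jac (-1) A B := by
  have hj := jac_ofReal (-1) A B
  rw [det_blockMap, one_mul]
  rw [neg_smul, ← sub_eq_add_neg] at hj
  rw [← hj]
  simp

lemma measurableSet_regSet : MeasurableSet (regSet R) := by
  have h : {z : Euc n × Euc n | (blockMap 1 1 (fderiv ℝ R z.1) (fderiv ℝ R z.2)).det ≠ 0} =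
      (fun z : Euc n × Euc n => jac (-1) (fderiv ℝ R z.1) (fderiv ℝ R z.2)) ⁻¹' {0}ᶜ := by
    ext z
    simp only [Set.mem_ofPred_eq, Set.mem_preimage, Set.mem_compl_iff, Set.mem_singleton_iff,
      ← ofReal_det_blockMap_one, Complex.ofReal_eq_zero, ne_eq]
  rw [regSet, h]
  exact (measurableSet_diffSet R).inter
    (measurable_jac_fderiv _ (measurableSet_singleton 0).compl)

/-- For two points with the same image both Lipschitz bounds are equalities, so the difference of
the points lies in the kernel of the derivative at the first one, which is invertible. -/
lemma injOn_twist_regSet (hR : LipschitzWith 1 R) : Set.InjOn (twist R 1 1) (regSet R) := by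
  rintro ⟨u, v⟩ hz ⟨u', v'⟩ - h
  simp only [twist, Prod.mk.injEq, one_smul] at h
  obtain ⟨h1, h2⟩ := h
  have e1 : R v' - R v = -(u' - u) := by linear_combination (norm := module) -h1
  have e2 : R u' - R u = -(v' - v) := by linear_combination (norm := module) -h2
  have l1 : ‖R v' - R v‖ ≤ ‖v' - v‖ := by simpa [dist_eq_norm] using hR.dist_le_mul v' v
  have l2 : ‖R u' - R u‖ ≤ ‖u' - u‖ := by simpa [dist_eq_norm] using hR.dist_le_mul u' u
  have n1 : ‖R v' - R v‖ = ‖u' - u‖ := by rw [e1, norm_neg]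
  have n2 : ‖R u' - R u‖ = ‖v' - v‖ := by rw [e2, norm_neg]
  have f1 := fderiv_of_norm_eq hR hz.1.1 (show ‖R u' - R u‖ = ‖u' - u‖ by linarith)
  have f2 := fderiv_of_norm_eq hR hz.1.2 (show ‖R v' - R v‖ = ‖v' - v‖ by linarith)
  -- the difference lies in the kernel of the derivative
  have hker : blockMap 1 1 (fderiv ℝ R u) (fderiv ℝ R v) (u' - u, v' - v) = 0 := by
    have : blockMap 1 1 (fderiv ℝ R u) (fderiv ℝ R v) (u' - u, v' - v) =
        ((u' - u) + (1 : ℝ) • fderiv ℝ R v (v' - v),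
          (v' - v) + (1 : ℝ) • fderiv ℝ R u (u' - u)) := rfl
    rw [this, f1, f2, e1, e2]
    simp
  have hinj := (LinearMap.equivOfDetNeZero
    (blockMap 1 1 (fderiv ℝ R u) (fderiv ℝ R v) : Euc n × Euc n →ₗ[ℝ] Euc n × Euc n)
    hz.2).injective
  have h0 := hinj (a₁ := (u' - u, v' - v)) (a₂ := 0) (by
    rw [map_zero]; exact hker)
  rw [Prod.mk_eq_zero, sub_eq_zero, sub_eq_zero] at h0
  rw [h0.1, h0.2]

variable {L : Set (Euc n)}

/-- The linear change of variables `(s, t) ↦ ((s + t) / 4, (s - t) / 4)`. -/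
lemma lintegral_prod_bound (hLm : MeasurableSet L) {H : Euc n → ℝ≥0∞} (hH : Measurable H) :
    ∫⁻ z : Euc n × Euc n, L.indicator 1 ((1 / 4 : ℝ) • (z.1 + z.2)) * H ((1 / 4 : ℝ) • (z.1 - z.2))
      = 8 ^ n * (volume L * ∫⁻ y, H y) := by
  have hF : Measurable (L.indicator (1 : Euc n → ℝ≥0∞)) := measurable_one.indicator hLm
  have hm : Measurable fun z : Euc n × Euc n => L.indicator (1 : Euc n → ℝ≥0∞)
      ((1 / 4 : ℝ) • (z.1 + z.2)) * H ((1 / 4 : ℝ) • (z.1 - z.2)) :=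
    (hF.comp (by fun_prop)).mul (hH.comp (by fun_prop))
  rw [Measure.volume_eq_prod, lintegral_prod_symm' _ hm]
  have e1 : ∀ t : Euc n, ∫⁻ s, L.indicator (1 : Euc n → ℝ≥0∞) ((1 / 4 : ℝ) • (s + t)) *
      H ((1 / 4 : ℝ) • (s - t)) = ∫⁻ a, L.indicator (1 : Euc n → ℝ≥0∞) ((1 / 4 : ℝ) • a) *
      H ((1 / 2 : ℝ) • ((1 / 2 : ℝ) • a - t)) := by
    intro t
    rw [← lintegral_add_right_eq_self (fun a : Euc n => L.indicator (1 : Euc n → ℝ≥0∞)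
      ((1 / 4 : ℝ) • a) * H ((1 / 2 : ℝ) • ((1 / 2 : ℝ) • a - t))) t]
    congr 1; ext s; congr 2; module
  simp only [e1]
  rw [lintegral_lintegral_swap]
  swap
  · exact Measurable.aemeasurable ((hF.comp (by fun_prop)).mul (hH.comp (by fun_prop)))
  have e2 : ∀ a : Euc n, ∫⁻ t, L.indicator (1 : Euc n → ℝ≥0∞) ((1 / 4 : ℝ) • a) *
      H ((1 / 2 : ℝ) • ((1 / 2 : ℝ) • a - t)) =
      L.indicator (1 : Euc n → ℝ≥0∞) ((1 / 4 : ℝ) • a) * (2 ^ n * ∫⁻ y, H y) := by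
    intro a
    have hm' : Measurable fun t : Euc n => H ((1 / 2 : ℝ) • ((1 / 2 : ℝ) • a - t)) :=
      hH.comp (by fun_prop)
    rw [lintegral_const_mul _ hm',
      lintegral_sub_left_eq_self (fun t => H ((1 / 2 : ℝ) • t)),
      lintegral_comp_smul _ (by norm_num)]
    congr 2
    rw [← inv_pow, ENNReal.ofReal_pow (by norm_num)]
    norm_num
  simp only [e2]
  have hF' : Measurable fun a : Euc n => L.indicator (1 : Euc n → ℝ≥0∞) ((1 / 4 : ℝ) • a) :=
    hF.comp (by fun_prop)
  rw [lintegral_mul_const _ hF', lintegral_comp_smul _ (by norm_num),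
    lintegral_indicator_one hLm, ← inv_pow, ENNReal.ofReal_pow (by norm_num)]
  have : ENNReal.ofReal ((1 / 4 : ℝ)⁻¹) = 4 := by norm_num
  rw [this, show (8 : ℝ≥0∞) = 4 * 2 by norm_num, mul_pow]
  ring

/-- The reverse Santaló inequality in the form `|L| ∫ exp (-h_L) ≥ π ^ n`. It comes from
`pi_pow_le_integral_det` for `R = 2 P - id`, with `P` the metric projection onto `L`: there
`‖u‖ ^ 2 - ‖R u‖ ^ 2 = 4 h_L (u - P u)`, the Jacobian is that of `twist R 1 1`, and the image
`(s, t)` of `(u, v)` satisfies `(s + t) / 4 = (P u + P v) / 2 ∈ L`. -/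
theorem pi_pow_le_volume_mul (hLc : Convex ℝ L) (hLk : IsCompact L) (hs : ∀ x ∈ L, -x ∈ L)
    {r : ℝ} (hr : 0 < r) (hb : Metric.closedBall (0 : Euc n) r ⊆ L) :
    ENNReal.ofReal (Real.pi ^ n) ≤ volume L * ∫⁻ y, ENNReal.ofReal (Real.exp (-supp L y)) := by
  have h0 : (0 : Euc n) ∈ L := hb (Metric.mem_closedBall_self hr.le)
  have hne : L.Nonempty := ⟨0, h0⟩
  choose P hPL hP using fun u => exists_norm_eq_iInf_of_complete_convex hne hLk.isComplete hLc u
  have hP' : ∀ u, ∀ w ∈ L, ⟪u - P u, w - P u⟫ ≤ 0 := fun u =>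
    (norm_eq_iInf_iff_real_inner_le_zero hLc (hPL u)).1 (hP u)
  have hsupp : ∀ u, supp L (u - P u) = ⟪P u, u - P u⟫ := fun u => by
    refine le_antisymm (supp_le hne fun w hw => ?_) (le_supp hLk (hPL u) _)
    have := hP' u w hw
    rw [inner_sub_right, real_inner_comm, real_inner_comm (P u)] at this
    linarith
  -- firm nonexpansiveness of `P` makes `2 P - id` a 1-Lipschitz map
  set R : Euc n → Euc n := fun u => (2 : ℝ) • P u - u with hRdef
  have hR : LipschitzWith 1 R := by
    refine LipschitzWith.of_dist_le_mul fun u v => ?_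
    rw [NNReal.coe_one, one_mul, dist_eq_norm, dist_eq_norm]
    refine le_of_sq_le_sq ?_ (norm_nonneg _)
    have e : R u - R v = (2 : ℝ) • (P u - P v) - (u - v) := by simp only [hRdef]; module
    rw [e, norm_sub_sq_real, real_inner_smul_left, norm_smul, mul_pow]
    have a1 := hP' u (P v) (hPL v)
    have a2 := hP' v (P u) (hPL u)
    have a3 : ⟪P u - P v, u - v⟫ = ‖P u - P v‖ ^ 2 + (-⟪u - P u, P v - P u⟫)
        + (-⟪v - P v, P u - P v⟫) := by
      rw [← real_inner_self_eq_norm_sq, ← inner_neg_right, neg_sub, ← inner_neg_left,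
        ← inner_add_left, real_inner_comm, ← inner_add_left]
      congr 1
      abel
    norm_num
    nlinarith
  have hP0 : P 0 = 0 := by
    have := hP' 0 0 h0
    rw [zero_sub, real_inner_self_nonpos, neg_eq_zero] at this
    exact this
  have hR0 : R 0 = 0 := by simp [hRdef, hP0]
  have hq : ∀ u, ‖u‖ ^ 2 - ‖R u‖ ^ 2 = 4 * supp L (u - P u) := by
    intro u
    simp only [hRdef]
    rw [hsupp, norm_sub_sq_real, real_inner_smul_left, norm_smul, mul_pow, inner_sub_right,
      real_inner_self_eq_norm_sq]
    norm_num
    ring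
  obtain ⟨C, hC⟩ := hLk.isBounded.exists_norm_le
  have hI : Integrable fun u : Euc n => Real.exp (-(‖u‖ ^ 2 - ‖R u‖ ^ 2)) := by
    refine ((integrable_exp_neg_norm (n := n) (c := 4 * r) (by positivity)).const_mul
      (Real.exp (4 * r * C))).mono' (Continuous.aestronglyMeasurable ?_)
      (Filter.Eventually.of_forall fun u => ?_)
    · have := hR.continuous
      fun_prop
    · rw [Real.norm_eq_abs, Real.abs_exp, ← Real.exp_add, hq]
      refine Real.exp_le_exp.2 ?_
      have h1 := norm_le_supp hLk hr.le hb (u - P u)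
      have h2 : ‖u‖ - C ≤ ‖u - P u‖ :=
        (sub_le_sub_left (hC _ (hPL u)) _).trans (norm_sub_norm_le _ _)
      nlinarith [mul_le_mul_of_nonneg_left h2 hr.le]
  obtain ⟨hitg, hle⟩ := pi_pow_le_integral_det hR hR0 hI
  have hcs := continuous_supp hLk hne
  let H : Euc n → ℝ≥0∞ := fun y => ENNReal.ofReal (Real.exp (-supp L ((8 : ℝ) • y)))
  have hH : Measurable H :=
    (show Continuous fun y => Real.exp (-supp L ((8 : ℝ) • y)) by fun_prop).measurable.ennreal_ofReal
  let g : Euc n × Euc n → ℝ≥0∞ := fun z =>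
    L.indicator 1 ((1 / 4 : ℝ) • (z.1 + z.2)) * H ((1 / 4 : ℝ) • (z.1 - z.2))
  -- subadditivity and symmetry of `h_L` bound `h_L` at `(u - P u) - (v - P v)`
  have hpt : ∀ z : Euc n × Euc n, ENNReal.ofReal (Real.exp (-(‖z.1‖ ^ 2 - ‖R z.1‖ ^ 2
      + (‖z.2‖ ^ 2 - ‖R z.2‖ ^ 2)))) ≤ g (twist R 1 1 z) := by
    rintro ⟨u, v⟩
    have m1 : (1 / 4 : ℝ) • ((twist R 1 1 (u, v)).1 + (twist R 1 1 (u, v)).2) =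
        (1 / 2 : ℝ) • P u + (1 / 2 : ℝ) • P v := by
      simp only [twist, hRdef]; module
    have m2 : (8 : ℝ) • (1 / 4 : ℝ) • ((twist R 1 1 (u, v)).1 - (twist R 1 1 (u, v)).2) =
        (4 : ℝ) • ((u - P u) + -(v - P v)) := by
      simp only [twist, hRdef]; module
    have m3 : (1 / 2 : ℝ) • P u + (1 / 2 : ℝ) • P v ∈ L :=
      hLc (hPL u) (hPL v) (by norm_num) (by norm_num) (by norm_num)
    simp only [g, H]
    rw [m1, m2, Set.indicator_of_mem m3, Pi.one_apply, one_mul, hq, hq,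
      supp_smul hLk hne (by norm_num)]
    refine ENNReal.ofReal_le_ofReal (Real.exp_le_exp.2 ?_)
    have := supp_add_le hLk hne (u - P u) (-(v - P v))
    rw [supp_neg hLk hne hs] at this
    linarith
  have step1 : ENNReal.ofReal (Real.pi ^ n) ≤ ∫⁻ z in regSet R,
      ENNReal.ofReal |(blockMap 1 1 (fderiv ℝ R z.1) (fderiv ℝ R z.2)).det| *
        g (twist R 1 1 z) := by
    refine (ENNReal.ofReal_le_ofReal hle).trans ?_
    rw [ofReal_integral_eq_lintegral_ofReal hitg
      (Filter.Eventually.of_forall fun z => by positivity),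
      ← lintegral_indicator measurableSet_regSet]
    refine lintegral_mono_ae ?_
    filter_upwards [ae_mem_diffSet hR] with z hz
    by_cases hd : (blockMap 1 1 (fderiv ℝ R z.1) (fderiv ℝ R z.2)).det = 0
    · simp [hd]
    · rw [Set.indicator_of_mem (show z ∈ regSet R from ⟨hz, hd⟩),
        mul_comm, ENNReal.ofReal_mul (abs_nonneg _)]
      exact mul_le_mul_right (hpt z) _
  refine step1.trans ?_
  rw [← lintegral_image_eq_lintegral_abs_det_fderiv_mul volume measurableSet_regSet
    (fun z hz => (hasFDerivAt_twist hz.1).hasFDerivWithinAt) (injOn_twist_regSet hR) g]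
  refine (setLIntegral_le_lintegral _ _).trans (le_of_eq ?_)
  simp only [g]
  rw [lintegral_prod_bound hLk.isClosed.measurableSet hH]
  simp only [H]
  rw [lintegral_comp_smul (fun y => ENNReal.ofReal (Real.exp (-supp L y))) (by norm_num),
    mul_left_comm, ← mul_assoc (8 ^ n : ℝ≥0∞)]
  have : (8 : ℝ≥0∞) ^ n * ENNReal.ofReal ((8 : ℝ) ^ n)⁻¹ = 1 := by
    rw [ENNReal.ofReal_inv_of_pos (by positivity), ENNReal.ofReal_pow (by norm_num)]
    rw [show ENNReal.ofReal 8 = 8 by norm_num]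
    exact ENNReal.mul_inv_cancel (by simp) (by simp)
  rw [this, one_mul]

end Projection

/-! ### Half-spaces and centroids -/

section Dilation
variable {n : ℕ} {C : Set (Euc n)}

lemma homothety_image_subset (hC : Convex ℝ C) {a : Euc n} (ha : a ∈ C) {r : ℝ} (h0 : 0 ≤ r)
    (h1 : r ≤ 1) : AffineMap.homothety a r '' C ⊆ C := by
  rintro _ ⟨x, hx, rfl⟩
  have h : AffineMap.homothety a r x = (1 - r) • a + r • x := by
    rw [AffineMap.homothety_apply, vsub_eq_sub, vadd_eq_add]; module
  rw [h]
  exact hC ha hx (by linarith) h0 (by ring)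

lemma volume_real_homothety (a : Euc n) {r : ℝ} (h0 : 0 ≤ r) (s : Set (Euc n)) :
    volume.real (AffineMap.homothety a r '' s) = r ^ n * volume.real s := by
  rw [Measure.real, Measure.addHaar_image_homothety, finrank_euclideanSpace, Fintype.card_fin,
    ENNReal.toReal_mul, ENNReal.toReal_ofReal (abs_nonneg _), abs_of_nonneg (by positivity)]
  rfl

/-- The dilation ratio `1 - 1 / (2 n)`, whose `n`-th power is at least `1 / 2`. -/
lemma half_le_ratio_pow (hn : 1 ≤ n) :
    0 ≤ 1 - 1 / (2 * n : ℝ) ∧ 1 - 1 / (2 * n : ℝ) ≤ 1 ∧ 1 / 2 ≤ (1 - 1 / (2 * n : ℝ)) ^ n := by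
  have hn' : (1 : ℝ) ≤ n := by exact_mod_cast hn
  have h1 : 1 / (2 * n : ℝ) ≤ 1 / 2 := by
    apply one_div_le_one_div_of_le <;> linarith
  have h2 : 0 < 1 / (2 * n : ℝ) := by positivity
  refine ⟨by linarith, by linarith, ?_⟩
  have h := one_add_mul_le_pow (a := -(1 / (2 * n : ℝ))) (by linarith) n
  have h3 : 1 + (n : ℝ) * -(1 / (2 * n : ℝ)) = 1 / 2 := by field_simp; norm_num
  rw [h3, ← sub_eq_add_neg] at h
  exact h

/-- A half-space through the centroid contains a polynomially large portion of a convex body: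
otherwise dilating towards the top of the body would move too much mass into it. -/
lemma volume_le_mul_halfspace (hn : 1 ≤ n) (hC : Convex ℝ C) (hk : IsCompact C)
    (hv : volume C ≠ 0) (X : Euc n →L[ℝ] ℝ) (hX : ∫ x in C, X x = 0) :
    volume.real C ≤ (2 * n + 2) * volume.real (C ∩ {x | 0 ≤ X x}) := by
  have hne : C.Nonempty := nonempty_of_measure_ne_zero hv
  have hfin : volume C ≠ ∞ := hk.measure_lt_top.ne
  have hCm : MeasurableSet C := hk.isClosed.measurableSet
  have : IsFiniteMeasure (volume.restrict C) := ⟨by simpa using hk.measure_lt_top⟩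
  have hitg : IntegrableOn X C := X.continuous.continuousOn.integrableOn_compact hk
  have hn' : (1 : ℝ) ≤ n := by exact_mod_cast hn
  obtain ⟨a, ha, hmax⟩ := hk.exists_isMaxOn hne X.continuous.continuousOn
  have hmax' : ∀ x ∈ C, X x ≤ X a := hmax
  set P := {x | 0 ≤ X x} with hP
  have hPm : MeasurableSet P := measurableSet_le measurable_const X.continuous.measurable
  rcases le_or_gt (X a) 0 with h0 | h0
  · have hae : (fun x => -X x) =ᵐ[volume.restrict C] 0 := by
      refine (setIntegral_eq_zero_iff_of_nonneg_ae ?_ hitg.neg).1 ?_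
      · filter_upwards [ae_restrict_mem hCm] with x hx
        simpa using (hmax' x hx).trans h0
      · simpa [integral_neg] using hX
    have : volume C = volume (C ∩ P) := by
      have h1 : ∀ᵐ x ∂(volume.restrict C), x ∈ P := by
        filter_upwards [hae] with x hx
        simp only [Pi.zero_apply, neg_eq_zero] at hx
        exact hx.ge
      have h2 : volume.restrict C P = volume.restrict C Set.univ :=
        measure_congr (by filter_upwards [h1] with x hx; exact propext (iff_true_intro hx))
      rwa [Measure.restrict_apply hPm, Measure.restrict_apply_univ, Set.inter_comm, eq_comm] at h2
    rw [Measure.real, Measure.real, ← this]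
    nlinarith [ENNReal.toReal_nonneg (a := volume C)]
  set h := X a
  -- mean zero bounds the mass of `B` by that of `P`, and shrinking `C \ B` towards the top `a`
  -- lands in `P`
  set B := {x | X x < -(h / (2 * n))} with hB
  have hBm : MeasurableSet B := measurableSet_lt X.continuous.measurable measurable_const
  have e1 : 0 ≤ h * volume.real (C ∩ P) - h / (2 * n) * volume.real (C ∩ B) := by
    have i1 : Integrable (P.indicator (1 : Euc n → ℝ)) (volume.restrict C) :=
      (integrable_const (1 : ℝ)).indicator hPm
    have i2 : Integrable (B.indicator (1 : Euc n → ℝ)) (volume.restrict C) :=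
      (integrable_const (1 : ℝ)).indicator hBm
    have : ∫ x in C, X x ≤ ∫ x in C, (h * P.indicator 1 x - h / (2 * n) * B.indicator 1 x) := by
      refine setIntegral_mono_on hitg ((i1.const_mul _).sub (i2.const_mul _)) hCm fun x hx => ?_
      by_cases hxP : x ∈ P
      · have hxB : x ∉ B := by
          simp only [hB, hP, Set.mem_ofPred_eq, not_lt] at hxP ⊢
          refine le_trans ?_ hxP
          have : 0 ≤ h / (2 * n) := by positivity
          linarith
        simpa [hxP, hxB] using hmax' x hx
      · by_cases hxB : x ∈ B
        · simp only [hxP, hxB, not_false_eq_true, Set.indicator_of_notMem, Set.indicator_of_mem,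
            Pi.one_apply]
          have : X x < -(h / (2 * n)) := hxB
          linarith
        · simp only [hP, Set.mem_ofPred_eq, not_le] at hxP
          simp [hxB, hP, hxP.not_ge, hxP.le]
    rw [hX, integral_sub (i1.const_mul _) (i2.const_mul _), integral_const_mul,
      integral_const_mul, integral_indicator_one hPm, integral_indicator_one hBm,
      measureReal_restrict_apply hPm, measureReal_restrict_apply hBm, Set.inter_comm P,
      Set.inter_comm B] at this
    exact this
  have e2 : volume.real (C ∩ B) ≤ 2 * n * volume.real (C ∩ P) := by
    have : h / (2 * n) * volume.real (C ∩ B) ≤ h / (2 * n) * (2 * n * volume.real (C ∩ P)) := by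
      have : h / (2 * n) * (2 * n * volume.real (C ∩ P)) = h * volume.real (C ∩ P) := by
        field_simp
      linarith
    exact le_of_mul_le_mul_left this (by positivity)
  obtain ⟨r0, r1, r2⟩ := half_le_ratio_pow hn
  set r : ℝ := 1 - 1 / (2 * n)
  have e3 : AffineMap.homothety a r '' (C \ B) ⊆ C ∩ P := by
    refine Set.subset_inter ((Set.image_mono Set.sdiff_subset).trans
      (homothety_image_subset hC ha r0 r1)) ?_
    rintro _ ⟨x, hx, rfl⟩
    have hxB : -(h / (2 * n)) ≤ X x := not_lt.1 hx.2
    have hXa : X a = h := rfl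
    have hh : 1 - r = 1 / (2 * n) := by simp only [r]; ring
    have h4 : h / (2 * n) = h * (1 - r) := by rw [hh]; ring
    simp only [hP, Set.mem_ofPred_eq, AffineMap.homothety_apply, vsub_eq_sub, vadd_eq_add, map_add,
      map_smul, map_sub, smul_eq_mul, hXa]
    rw [h4] at hxB
    nlinarith [mul_le_mul_of_nonneg_left hxB r0, mul_nonneg h0.le (sub_nonneg.2 r1),
      mul_nonneg (mul_nonneg h0.le (sub_nonneg.2 r1)) (sub_nonneg.2 r1)]
  have e4 : r ^ n * volume.real (C \ B) ≤ volume.real (C ∩ P) := by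
    rw [← volume_real_homothety a r0]
    exact measureReal_mono e3 (measure_ne_top_of_subset Set.inter_subset_left hfin)
  have e5 : volume.real C = volume.real (C ∩ B) + volume.real (C \ B) :=
    (measureReal_inter_add_sdiff hBm hfin).symm
  have e6 : 1 / 2 * volume.real (C \ B) ≤ r ^ n * volume.real (C \ B) :=
    mul_le_mul_of_nonneg_right r2 measureReal_nonneg
  linarith

/-- A functional with mean zero on a convex body is bounded below in terms of its maximum:
over the copy of `C` shrunk towards a point `a` with `X a` very negative, the integral of `X` would
be too negative to be compensated by the rest of `C`. -/
lemma neg_le_mul_of_integral_eq_zero (hn : 1 ≤ n) (hC : Convex ℝ C) (hk : IsCompact C)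
    (hv : volume C ≠ 0) (X : Euc n →L[ℝ] ℝ) (hX : ∫ x in C, X x = 0) {h : ℝ}
    (hh : ∀ x ∈ C, X x ≤ h) {a : Euc n} (ha : a ∈ C) : -X a ≤ 2 * n * h := by
  have hfin : volume C ≠ ∞ := hk.measure_lt_top.ne
  have hCm : MeasurableSet C := hk.isClosed.measurableSet
  have hitg : IntegrableOn X C := X.continuous.continuousOn.integrableOn_compact hk
  have hn' : (1 : ℝ) ≤ n := by exact_mod_cast hn
  have hpos : 0 < volume.real C := ENNReal.toReal_pos hv hfin
  have h0 : 0 ≤ h := by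
    have := setIntegral_mono_on hitg (integrableOn_const hfin) hCm hh
    rw [hX, setIntegral_const, smul_eq_mul] at this
    exact nonneg_of_mul_nonneg_right this hpos
  obtain ⟨r0, r1, r2⟩ := half_le_ratio_pow hn
  set r : ℝ := 1 - 1 / (2 * n) with hr
  have hrpos : 0 < r := by
    rcases r0.eq_or_lt with h | h
    · rw [← h, zero_pow (by omega)] at r2; norm_num at r2
    · exact h
  let f : Euc n → Euc n := fun x => (1 - r) • a + r • x
  have hf : f = AffineMap.homothety a r := by
    funext x
    rw [AffineMap.homothety_apply, vsub_eq_sub, vadd_eq_add]; simp only [f]; module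
  have hsub : f '' C ⊆ C := hf ▸ homothety_image_subset hC ha r0 r1
  have hfk : IsCompact (f '' C) := hk.image (by fun_prop)
  have hfm : MeasurableSet (f '' C) := hfk.isClosed.measurableSet
  have hvol : volume.real (f '' C) = r ^ n * volume.real C := hf ▸ volume_real_homothety a r0 C
  have e1 : ∫ x in f '' C, X x = r ^ n * (1 - r) * X a * volume.real C := by
    rw [integral_image_eq_integral_abs_det_fderiv_smul volume hCm (f := f)
      (f' := fun _ => r • ContinuousLinearMap.id ℝ (Euc n))
      (fun x _ => (((hasFDerivAt_id x).const_smul r).const_add _).hasFDerivWithinAt)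
      (fun x _ y _ hxy => by
        simp only [f, add_right_inj] at hxy
        exact smul_right_injective _ hrpos.ne' hxy)]
    have hdet : (r • ContinuousLinearMap.id ℝ (Euc n)).det = r ^ n := by
      have : (r • ContinuousLinearMap.id ℝ (Euc n)).det =
        LinearMap.det (r • (LinearMap.id : Euc n →ₗ[ℝ] Euc n)) := rfl
      rw [this, LinearMap.det_smul]
      simp
    have i3 : IntegrableOn (fun _ : Euc n => (1 - r) * X a) C := integrableOn_const hfin
    simp only [hdet, f, map_add, map_smul, smul_eq_mul]
    rw [integral_const_mul, integral_add i3 (hitg.const_mul r),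
      setIntegral_const, integral_const_mul r, hX, abs_of_nonneg (by positivity), smul_eq_mul]
    ring
  have e2 : ∫ x in C \ f '' C, X x ≤ h * (volume.real C - r ^ n * volume.real C) := by
    have := setIntegral_mono_on (hitg.mono_set Set.sdiff_subset)
      (integrableOn_const (measure_ne_top_of_subset Set.sdiff_subset hfin) (C := h))
      (hCm.diff hfm) (fun x hx => hh x hx.1)
    rw [setIntegral_const, smul_eq_mul, measureReal_sdiff hsub hfm, hvol] at this
    linarith
  have e3 := setIntegral_sdiff hfm hitg hsub
  rw [hX, e1, zero_sub] at e3
  rw [e3] at e2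
  have h1r : 1 - r = 1 / (2 * n) := by simp only [hr]; ring
  have e4 : -X a * (r ^ n * (1 - r)) ≤ h * (1 - r ^ n) := by
    have : (-X a * (r ^ n * (1 - r))) * volume.real C ≤ (h * (1 - r ^ n)) * volume.real C := by
      linarith
    exact le_of_mul_le_mul_right this hpos
  rcases le_or_gt (-X a) 0 with hx | hx
  · have : 0 ≤ 2 * n * h := by positivity
    linarith
  have e5 : -X a * (1 / 2 * (1 / (2 * n))) ≤ h * (1 / 2) := by
    refine le_trans ?_ (e4.trans ?_)
    · rw [h1r]; gcongr
    · gcongr; linarith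
  have e6 : -X a = -X a * (1 / 2 * (1 / (2 * n))) * (4 * n) := by field_simp; ring
  rw [e6]
  nlinarith [mul_le_mul_of_nonneg_right e5 (show (0 : ℝ) ≤ 4 * n by positivity)]

end Dilation

/-! ### Laplace integrals over simplicial cones -/

section Cone
variable {n : ℕ} {K : Set (Euc n)}

/-- First-order optimality of a maximiser of `∏ xⱼ`: if `∏ ((1 - s) aⱼ + s bⱼ)` never exceeds
`∏ aⱼ` then `∑ bⱼ / aⱼ ≤ n`. -/
lemma sum_div_le_of_prod_le {a b : Fin n → ℝ} (ha : ∀ j, 0 < a j) (hb : ∀ j, 0 ≤ b j)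
    (h : ∀ s ∈ Set.Icc (0 : ℝ) 1, ∏ j, ((1 - s) * a j + s * b j) ≤ ∏ j, a j) :
    ∑ j, b j / a j ≤ n := by
  set d : Fin n → ℝ := fun j => b j / a j - 1 with hd
  have hpos : ∀ s ∈ Set.Ioo (0 : ℝ) 1, ∀ j, 0 < 1 + s * d j := by
    intro s hs j
    have : 0 ≤ b j / a j := div_nonneg (hb j) (ha j).le
    simp only [hd]
    nlinarith [hs.1, hs.2]
  have h1 : ∀ s ∈ Set.Ioo (0 : ℝ) 1, ∑ j, d j / (1 + s * d j) ≤ 0 := by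
    intro s hs
    have hp := h s ⟨hs.1.le, hs.2.le⟩
    have e : ∏ j, ((1 - s) * a j + s * b j) = (∏ j, a j) * ∏ j, (1 + s * d j) := by
      rw [← Finset.prod_mul_distrib]
      refine Finset.prod_congr rfl fun j _ => ?_
      have := (ha j).ne'
      simp only [hd]; field_simp; ring
    have hap : 0 < ∏ j, a j := Finset.prod_pos fun j _ => ha j
    have hle : ∏ j, (1 + s * d j) ≤ 1 := by
      rw [e] at hp
      exact le_of_mul_le_mul_left (by linarith) hap
    have hlog : ∑ j, Real.log (1 + s * d j) ≤ 0 := by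
      rw [← Real.log_prod (fun j _ => (hpos s hs j).ne')]
      exact Real.log_nonpos (Finset.prod_nonneg fun j _ => (hpos s hs j).le) hle
    have h2 : s * ∑ j, d j / (1 + s * d j) ≤ 0 := by
      refine le_trans ?_ hlog
      rw [Finset.mul_sum]
      refine Finset.sum_le_sum fun j _ => ?_
      have h3 := Real.one_sub_inv_le_log_of_pos (hpos s hs j)
      have h4 := (hpos s hs j).ne'
      have : s * (d j / (1 + s * d j)) = 1 - (1 + s * d j)⁻¹ := by
        field_simp; ring
      rw [this]; exact h3
    exact nonpos_of_mul_nonpos_right h2 hs.1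
  have hlim : Filter.Tendsto (fun s : ℝ => ∑ j, d j / (1 + s * d j)) (nhdsWithin 0 (Set.Ioi 0))
      (nhds (∑ j, d j)) := by
    refine Filter.Tendsto.mono_left ?_ nhdsWithin_le_nhds
    refine tendsto_finsetSum _ fun j _ => ?_
    have : ContinuousAt (fun s : ℝ => d j / (1 + s * d j)) 0 :=
      ContinuousAt.div (by fun_prop) (by fun_prop) (by simp)
    simpa [ContinuousAt] using this
  have h2 : ∑ j, d j ≤ 0 := by
    refine le_of_tendsto hlim ?_
    filter_upwards [Ioo_mem_nhdsGT (zero_lt_one' ℝ)] with s hs using h1 s hs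
  simp only [hd, Finset.sum_sub_distrib, Finset.sum_const, Finset.card_univ, Fintype.card_fin,
    nsmul_eq_mul, mul_one] at h2
  linarith

lemma lintegral_toLin' {M : Matrix (Fin n) (Fin n) ℝ} (hM : M.det ≠ 0) {F : (Fin n → ℝ) → ℝ≥0∞}
    (hF : Measurable F) :
    ∫⁻ x : Euc n, F (Matrix.toLin' M (WithLp.ofLp x)) = ENNReal.ofReal |M.det⁻¹| * ∫⁻ x, F x := by
  have hm : Measurable (Matrix.toLin' M) :=
    (LinearMap.continuous_of_finiteDimensional _).measurable
  rw [(PiLp.volume_preserving_ofLp (Fin n)).lintegral_comp (f := fun z => F (Matrix.toLin' M z))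
    (hF.comp hm), ← lintegral_map hF hm, Real.map_matrix_volume_pi_eq_smul_volume_pi hM,
    lintegral_smul_measure, smul_eq_mul]

/-- A linear coordinate system and its dual coordinate system have inverse Jacobians. -/
lemma lintegral_mul_lintegral_dual (φ : Euc n ≃ₗ[ℝ] (Fin n → ℝ)) {F G : (Fin n → ℝ) → ℝ≥0∞}
    (hF : Measurable F) (hG : Measurable G) :
    (∫⁻ x, F (φ x)) * ∫⁻ y, G (fun j => ⟪φ.symm (Pi.single j 1), y⟫) =
      (∫⁻ z, F z) * ∫⁻ z, G z := by
  set w := WithLp.linearEquiv 2 ℝ (Fin n → ℝ) with hw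
  set M := LinearMap.toMatrix' (φ.toLinearMap ∘ₗ w.symm.toLinearMap) with hM
  set P := LinearMap.toMatrix' (w.toLinearMap ∘ₗ φ.symm.toLinearMap) with hP
  have hMP : M * P = 1 := by
    rw [hM, hP, ← LinearMap.toMatrix'_comp, ← LinearMap.toMatrix'_id]
    congr 1
    ext x
    simp
  have hdet : M.det * P.det = 1 := by rw [← Matrix.det_mul, hMP, Matrix.det_one]
  have hM0 : M.det ≠ 0 := left_ne_zero_of_mul_eq_one hdet
  have hP0 : P.transpose.det ≠ 0 := by
    rw [Matrix.det_transpose]; exact right_ne_zero_of_mul_eq_one hdet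
  have e1 : ∀ x : Euc n, φ x = Matrix.toLin' M (WithLp.ofLp x) := by
    intro x
    rw [hM, Matrix.toLin'_toMatrix']
    rfl
  have e2 : ∀ y : Euc n, (fun j => ⟪φ.symm (Pi.single j 1), y⟫) =
      Matrix.toLin' P.transpose (WithLp.ofLp y) := by
    intro y
    funext j
    simp [Matrix.toLin'_apply, Matrix.mulVec, dotProduct, hP, LinearMap.toMatrix'_apply, hw,
      PiLp.inner_apply, mul_comm]
  simp only [e1, e2]
  rw [lintegral_toLin' hM0 hF, lintegral_toLin' hP0 hG, Matrix.det_transpose]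
  have : ENNReal.ofReal |M.det⁻¹| * ENNReal.ofReal |P.det⁻¹| = 1 := by
    rw [← ENNReal.ofReal_mul (abs_nonneg _), ← abs_mul, ← mul_inv, hdet]; simp
  calc _ = (ENNReal.ofReal |M.det⁻¹| * ENNReal.ofReal |P.det⁻¹|) *
        ((∫⁻ z, F z) * ∫⁻ z, G z) := by ring
    _ = _ := by rw [this, one_mul]

lemma lintegral_orthant :
    ∫⁻ z : Fin n → ℝ, ENNReal.ofReal (∏ j, (Set.Ici (0 : ℝ)).indicator (fun t => Real.exp (-t)) (z j))
      = 1 := by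
  have hitg : Integrable ((Set.Ici (0 : ℝ)).indicator (fun t => Real.exp (-t))) := by
    rw [integrable_indicator_iff measurableSet_Ici, integrableOn_Ici_iff_integrableOn_Ioi]
    simpa using integrableOn_exp_mul_Ioi (a := -1) (by norm_num) 0
  rw [← ofReal_integral_eq_lintegral_ofReal]
  · rw [integral_fintype_prod_volume_eq_prod
      (fun _ : Fin n => (Set.Ici (0 : ℝ)).indicator (fun t => Real.exp (-t)))]
    simp only [integral_indicator measurableSet_Ici, integral_Ici_eq_integral_Ioi,
      integral_exp_neg_Ioi_zero]
    simp
  · exact Integrable.fintype_prod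
      (f := fun _ : Fin n => (Set.Ici (0 : ℝ)).indicator (fun t => Real.exp (-t))) fun _ => hitg
  · exact Filter.Eventually.of_forall fun z => Finset.prod_nonneg fun j _ =>
      Set.indicator_nonneg (fun t _ => (Real.exp_pos _).le) _

lemma prod_indicator_exp {z : Fin n → ℝ} (hz : ∀ j, 0 ≤ z j) :
    ∏ j, (Set.Ici (0 : ℝ)).indicator (fun t => Real.exp (-t)) (z j) = Real.exp (-∑ j, z j) := by
  rw [← Finset.sum_neg_distrib, Real.exp_sum]
  exact Finset.prod_congr rfl fun j _ => Set.indicator_of_mem (hz j) _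

/-- The volume of a convex body inside a simplicial cone against the Laplace integral over the dual
cone.  In coordinates where the maximiser of `∏ xⱼ` is `(1, …, 1)`, the body lies in
`∑ xⱼ ≤ n` and its support function is at least `∑ yⱼ`. -/
theorem volume_inter_cone_mul_le (hc : Convex ℝ K) (hk : IsCompact K)
    (φ : Euc n ≃ₗ[ℝ] (Fin n → ℝ)) :
    volume (K ∩ {x | ∀ j, 0 ≤ φ x j}) *
      ∫⁻ y in {y | ∀ j, 0 ≤ ⟪φ.symm (Pi.single j 1), y⟫}, ENNReal.ofReal (Real.exp (-supp K y))
      ≤ ENNReal.ofReal (Real.exp n) := by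
  set A := K ∩ {x | ∀ j, 0 ≤ φ x j} with hA
  have hφ : Continuous φ := LinearMap.continuous_of_finiteDimensional φ.toLinearMap
  have hφj : ∀ j, Continuous fun x => φ x j := fun j => (continuous_apply j).comp hφ
  have hAclosed : IsClosed {x | ∀ j, 0 ≤ φ x j} := by
    simp only [Set.ofPred_forall]
    exact isClosed_iInter fun j => isClosed_le continuous_const (hφj j)
  have hAk : IsCompact A := hk.inter_right hAclosed
  by_cases hpos : ∃ q ∈ A, ∀ j, 0 < φ q j
  swap
  · have : volume A = 0 := by
      have hsub : A ⊆ ⋃ j, {x | φ x j = 0} := by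
        intro x hx
        by_contra hcon
        simp only [Set.mem_iUnion, Set.mem_ofPred_eq, not_exists] at hcon
        exact hpos ⟨x, hx, fun j => lt_of_le_of_ne (hx.2 j) (Ne.symm (hcon j))⟩
      refine measure_mono_null hsub (measure_iUnion_null fun j => ?_)
      have : LinearMap.ker (LinearMap.proj j ∘ₗ φ.toLinearMap) ≠ ⊤ := by
        intro h
        have h1 : φ.symm (Pi.single j 1) ∈ LinearMap.ker (LinearMap.proj j ∘ₗ φ.toLinearMap) := by
          rw [h]; trivial
        simp at h1
      exact Measure.addHaar_submodule volume _ this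
    rw [this, zero_mul]; exact zero_le
  obtain ⟨q₀, hq₀, hq₀'⟩ := hpos
  obtain ⟨p, hp, hmax⟩ := hAk.exists_isMaxOn ⟨q₀, hq₀⟩ (f := fun x => ∏ j, φ x j)
    (continuous_finsetProd _ fun j _ => hφj j).continuousOn
  have hp0 : ∀ j, 0 < φ p j := by
    have h1 : 0 < ∏ j, φ p j := lt_of_lt_of_le (Finset.prod_pos fun j _ => hq₀' j) (hmax hq₀)
    exact fun j => lt_of_le_of_ne (hp.2 j)
      (Ne.symm (Finset.prod_ne_zero_iff.1 h1.ne' j (Finset.mem_univ j)))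
  have hsum : ∀ q ∈ A, ∑ j, φ q j / φ p j ≤ n := by
    intro q hq
    refine sum_div_le_of_prod_le hp0 hq.2 fun s hs => ?_
    have hm : (1 - s) • p + s • q ∈ A := by
      refine ⟨hc hp.1 hq.1 (by linarith [hs.2]) hs.1 (by ring), fun j => ?_⟩
      have := hp.2 j
      have := hq.2 j
      simp only [map_add, map_smul, Pi.add_apply, Pi.smul_apply, smul_eq_mul]
      have := hs.1
      have : 0 ≤ 1 - s := by linarith [hs.2]
      positivity
    have := hmax hm
    simpa using this
  -- rescaled coordinates, in which `p` becomes `(1, …, 1)`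
  let χ : Euc n ≃ₗ[ℝ] (Fin n → ℝ) := φ.trans
    (LinearEquiv.piCongrRight fun j => LinearEquiv.smulOfNeZero ℝ ℝ (φ p j)⁻¹ (inv_ne_zero (hp0 j).ne'))
  have hχ : ∀ x j, χ x j = φ x j / φ p j := by
    intro x j
    simp [χ, div_eq_inv_mul]
  have hχs : ∀ j, χ.symm (Pi.single j 1) = φ p j • φ.symm (Pi.single j 1) := by
    intro j
    rw [LinearEquiv.symm_apply_eq]
    funext i
    rw [hχ]
    by_cases hij : i = j
    · subst hij; simp [(hp0 i).ne']
    · simp [hij]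
  set F : (Fin n → ℝ) → ℝ≥0∞ := fun z =>
    ENNReal.ofReal (∏ j, (Set.Ici (0 : ℝ)).indicator (fun t => Real.exp (-t)) (z j)) with hF
  have hFm : Measurable F := by
    refine ENNReal.measurable_ofReal.comp (Finset.measurable_prod _ fun j _ => ?_)
    exact (Measurable.indicator (by fun_prop) measurableSet_Ici).comp (measurable_pi_apply j)
  have hFI : ∫⁻ z, F z = 1 := lintegral_orthant
  have h1 : volume A ≤ ENNReal.ofReal (Real.exp n) * ∫⁻ x, F (χ x) := by
    have hχm : Measurable χ :=
      (LinearMap.continuous_of_finiteDimensional χ.toLinearMap).measurable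
    rw [← lintegral_const_mul (f := fun x => F (χ x)) _ (hFm.comp hχm), ← lintegral_indicator_one hAk.measurableSet]
    refine lintegral_mono fun x => ?_
    by_cases hx : x ∈ A
    · rw [Set.indicator_of_mem hx, Pi.one_apply, hF]
      simp only
      rw [prod_indicator_exp fun j => by rw [hχ]; exact div_nonneg (hx.2 j) (hp0 j).le,
        ← ENNReal.ofReal_mul (Real.exp_pos _).le, ← Real.exp_add, ENNReal.one_le_ofReal,
        Real.one_le_exp_iff]
      have := hsum x hx
      simp only [hχ]
      linarith
    · rw [Set.indicator_of_notMem hx]; exact zero_le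
  have h2 : ∫⁻ y in {y | ∀ j, 0 ≤ ⟪φ.symm (Pi.single j 1), y⟫},
      ENNReal.ofReal (Real.exp (-supp K y)) ≤ ∫⁻ y, F (fun j => ⟪χ.symm (Pi.single j 1), y⟫) := by
    have hYm : MeasurableSet {y : Euc n | ∀ j, 0 ≤ ⟪φ.symm (Pi.single j 1), y⟫} := by
      simp only [Set.ofPred_forall]
      exact MeasurableSet.iInter fun j => measurableSet_le measurable_const (by fun_prop)
    rw [← lintegral_indicator hYm]
    refine lintegral_mono fun y => ?_
    by_cases hy : y ∈ {y : Euc n | ∀ j, 0 ≤ ⟪φ.symm (Pi.single j 1), y⟫}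
    · rw [Set.indicator_of_mem hy, hF]
      simp only
      have hnn : ∀ j, 0 ≤ ⟪χ.symm (Pi.single j 1), y⟫ := by
        intro j
        rw [hχs, real_inner_smul_left]
        exact mul_nonneg (hp0 j).le (hy j)
      rw [prod_indicator_exp hnn]
      refine ENNReal.ofReal_le_ofReal (Real.exp_le_exp.2 (neg_le_neg ?_))
      have e : ∑ j, ⟪χ.symm (Pi.single j 1), y⟫ = ⟪p, y⟫ := by
        rw [← sum_inner]
        congr 1
        rw [← map_sum, LinearEquiv.symm_apply_eq]
        funext i
        rw [hχ, div_self (hp0 i).ne', Finset.sum_apply]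
        simp [Pi.single_apply]
      rw [e]
      exact le_supp hk hp.1 y
    · rw [Set.indicator_of_notMem hy]; exact zero_le
  calc _ ≤ (ENNReal.ofReal (Real.exp n) * ∫⁻ x, F (χ x)) *
        ∫⁻ y, F (fun j => ⟪χ.symm (Pi.single j 1), y⟫) := mul_le_mul' h1 h2
    _ = ENNReal.ofReal (Real.exp n) *
        ((∫⁻ x, F (χ x)) * ∫⁻ y, F (fun j => ⟪χ.symm (Pi.single j 1), y⟫)) := mul_assoc _ _ _
    _ = _ := by rw [lintegral_mul_lintegral_dual χ hFm hFm, hFI, mul_one, mul_one]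

end Cone

/-! ### Bisection of volumes -/

section Partition
variable {n : ℕ} {C : Set (Euc n)}

lemma volume_ker_eq_zero {X : Euc n →ₗ[ℝ] ℝ} (hX : X ≠ 0) : volume {x | X x = 0} = 0 := by
  have h : LinearMap.ker X ≠ ⊤ := fun h => hX (LinearMap.ker_eq_top.1 h)
  exact Measure.addHaar_submodule volume _ h

lemma measurable_linear (X : Euc n →ₗ[ℝ] ℝ) : Measurable X :=
  (LinearMap.continuous_of_finiteDimensional X).measurable

lemma volume_halfspaces_add (C : Set (Euc n)) {X : Euc n →ₗ[ℝ] ℝ} (hX : X ≠ 0) :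
    volume (C ∩ {x | 0 ≤ X x}) + volume (C ∩ {x | X x ≤ 0}) = volume C := by
  have h := measure_inter_add_sdiff C (μ := volume)
    (measurableSet_le measurable_const (measurable_linear X) : MeasurableSet {x | 0 ≤ X x})
  rw [← h]
  congr 1
  refine le_antisymm ?_ (measure_mono ?_)
  · calc volume (C ∩ {x | X x ≤ 0}) ≤ volume ((C \ {x | 0 ≤ X x}) ∪ {x | X x = 0}) := by
          refine measure_mono fun x hx => ?_
          rcases eq_or_ne (X x) 0 with h0 | h0
          · exact Or.inr h0
          · exact Or.inl ⟨hx.1, fun h1 => h0 (le_antisymm hx.2 h1)⟩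
      _ ≤ _ := (measure_union_le _ _).trans (by rw [volume_ker_eq_zero hX, add_zero])
  · exact fun x hx => ⟨hx.1, (lt_of_not_ge hx.2 : X x < 0).le⟩

/-- In a two-dimensional pencil of hyperplanes, one bisects the volume of a compact set, by
the intermediate value theorem for the rotation of the hyperplane by an angle in `[0, π]`. -/
lemma exists_bisect (hk : IsCompact C) (X₀ X₁ : Euc n →ₗ[ℝ] ℝ)
    (hX : ∀ c s : ℝ, c ^ 2 + s ^ 2 = 1 → c • X₀ + s • X₁ ≠ 0) :
    ∃ c s : ℝ, c ^ 2 + s ^ 2 = 1 ∧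
      volume (C ∩ {x | 0 ≤ (c • X₀ + s • X₁) x}) = volume C / 2 ∧
      volume (C ∩ {x | (c • X₀ + s • X₁) x ≤ 0}) = volume C / 2 := by
  set Y : ℝ → Euc n →ₗ[ℝ] ℝ := fun θ => Real.cos θ • X₀ + Real.sin θ • X₁ with hY
  have hYne : ∀ θ, Y θ ≠ 0 := fun θ => hX _ _ (Real.cos_sq_add_sin_sq θ)
  have hfin : volume C ≠ ∞ := hk.measure_lt_top.ne
  have hf : IsFiniteMeasure (volume.restrict C) := ⟨by simpa using hk.measure_lt_top⟩
  have hPm : ∀ θ, MeasurableSet {x | 0 ≤ Y θ x} := fun θ =>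
    measurableSet_le measurable_const (measurable_linear (Y θ))
  set g : ℝ → ℝ := fun θ => volume.real (C ∩ {x | 0 ≤ Y θ x}) with hg
  have hgi : ∀ θ, g θ = ∫ x in C, {x | 0 ≤ Y θ x}.indicator (1 : Euc n → ℝ) x := by
    intro θ
    rw [integral_indicator_one (hPm θ), measureReal_restrict_apply (hPm θ), Set.inter_comm]
  have hcont : Continuous g := by
    rw [continuous_iff_continuousAt]
    intro θ
    simp only [funext hgi]
    refine continuousAt_of_dominated (bound := fun _ => 1)
      (Filter.Eventually.of_forall fun θ' =>
        (aestronglyMeasurable_const.indicator (hPm θ')))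
      (Filter.Eventually.of_forall fun θ' => Filter.Eventually.of_forall fun x => ?_)
      (integrable_const _) ?_
    · by_cases hx : x ∈ {x | 0 ≤ Y θ' x} <;> simp [Set.indicator_of_mem, Set.indicator_of_notMem, hx]
    · have h0 : ∀ᵐ x ∂(volume.restrict C), Y θ x ≠ 0 := by
        refine ae_restrict_of_ae ?_
        rw [ae_iff]
        simpa using volume_ker_eq_zero (hYne θ)
      filter_upwards [h0] with x hx
      have hc : Continuous fun θ' => Y θ' x := by
        simp only [hY, LinearMap.add_apply, LinearMap.smul_apply, smul_eq_mul]
        fun_prop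
      rcases lt_or_gt_of_ne hx with hx | hx
      · have : (fun θ' => {x | 0 ≤ Y θ' x}.indicator (1 : Euc n → ℝ) x) =ᶠ[nhds θ] fun _ => 0 := by
          filter_upwards [(hc.tendsto θ).eventually (gt_mem_nhds hx)] with θ' h'
          exact Set.indicator_of_notMem (show x ∉ {x | 0 ≤ Y θ' x} from not_le.2 h') _
        exact continuousAt_const.congr this.symm
      · have : (fun θ' => {x | 0 ≤ Y θ' x}.indicator (1 : Euc n → ℝ) x) =ᶠ[nhds θ] fun _ => 1 := by
          filter_upwards [(hc.tendsto θ).eventually (lt_mem_nhds hx)] with θ' h'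
          exact Set.indicator_of_mem (show x ∈ {x | 0 ≤ Y θ' x} from h'.le) _
        exact continuousAt_const.congr this.symm
  have hsum : g 0 + g Real.pi = volume.real C := by
    have h := volume_halfspaces_add C (hYne 0)
    have e : {x | Y 0 x ≤ 0} = {x | 0 ≤ Y Real.pi x} := by
      ext x; simp [hY]
    rw [e] at h
    simp only [hg, Measure.real]
    rw [← ENNReal.toReal_add, h] <;>
      exact measure_ne_top_of_subset Set.inter_subset_left hfin
  have hmem : volume.real C / 2 ∈ Set.uIcc (g 0) (g Real.pi) := by
    rw [Set.mem_uIcc]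
    rcases le_total (g 0) (g Real.pi) with h | h
    · left; constructor <;> linarith
    · right; constructor <;> linarith
  obtain ⟨θ, -, hθ⟩ := intermediate_value_uIcc hcont.continuousOn hmem
  have h1 : volume (C ∩ {x | 0 ≤ Y θ x}) = volume C / 2 := by
    have h3 : volume (C ∩ {x | 0 ≤ Y θ x}) ≠ ∞ :=
      measure_ne_top_of_subset Set.inter_subset_left hfin
    have h4 : volume C / 2 ≠ ∞ := ENNReal.div_ne_top hfin (by norm_num)
    rw [← ENNReal.toReal_eq_toReal_iff' h3 h4, ENNReal.toReal_div]
    exact hθ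
  refine ⟨Real.cos θ, Real.sin θ, Real.cos_sq_add_sin_sq θ, h1, ?_⟩
  have h2 := volume_halfspaces_add C (hYne θ)
  rw [h1] at h2
  have h4 : volume C / 2 ≠ ∞ := ENNReal.div_ne_top hfin (by norm_num)
  rw [← ENNReal.add_right_inj h4]
  exact h2.trans (ENNReal.add_halves _).symm

lemma integral_linear (hk : IsCompact C) (X : Euc n →ₗ[ℝ] ℝ) :
    ∫ x in C, X x = X (∫ x in C, x) := by
  have hitg : Integrable (fun x : Euc n => x) (volume.restrict C) :=
    continuous_id.continuousOn.integrableOn_compact hk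
  exact ContinuousLinearMap.integral_comp_comm X.toContinuousLinearMap hitg

/-- Coordinates on a hyperplane `ker u`, completed by a transversal vector `ε b`. -/
lemma exists_extend_coords {V : Type} [AddCommGroup V] [Module ℝ V] {m : ℕ} (u : V →ₗ[ℝ] ℝ) (b : V)
    (hub : u b = 1) (pr : V →ₗ[ℝ] LinearMap.ker u) (hpr : ∀ v, (pr v : V) = v - u v • b)
    (φ : LinearMap.ker u ≃ₗ[ℝ] (Fin (m + 1) → ℝ)) {ε : ℝ} (hε : ε * ε = 1) :
    ∃ Φ : V ≃ₗ[ℝ] (Fin (m + 2) → ℝ), (∀ v, Φ v 0 = ε * u v) ∧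
      (∀ v j, Φ v (Fin.succ j) = φ (pr v) j) ∧ Φ.symm (Pi.single 0 1) = ε • b ∧
      ∀ j, Φ.symm (Pi.single (Fin.succ j) 1) = φ.symm (Pi.single j 1) := by
  let f : V →ₗ[ℝ] (Fin (m + 2) → ℝ) :=
    LinearMap.pi (Fin.cons (ε • u) fun j => LinearMap.proj j ∘ₗ φ.toLinearMap ∘ₗ pr)
  let g : (Fin (m + 2) → ℝ) →ₗ[ℝ] V :=
    (LinearMap.proj 0 : (Fin (m + 2) → ℝ) →ₗ[ℝ] ℝ).smulRight (ε • b) +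
      (LinearMap.ker u).subtype ∘ₗ φ.symm.toLinearMap ∘ₗ
        LinearMap.pi fun j => LinearMap.proj (Fin.succ j)
  have hf0 : ∀ v, f v 0 = ε * u v := fun v => by simp [f]
  have hfs : ∀ v j, f v (Fin.succ j) = φ (pr v) j := fun v j => by simp [f]
  have hg : ∀ w, g w = w 0 • ε • b + φ.symm (fun j => w (Fin.succ j)) := fun w => rfl
  have hprk : ∀ k : LinearMap.ker u, pr k = k := fun k => by
    apply Subtype.ext
    rw [hpr, LinearMap.mem_ker.1 k.2]; simp
  have hprb : pr b = 0 := by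
    apply Subtype.ext
    rw [hpr, hub]; simp
  have hgf : ∀ v, g (f v) = v := by
    intro v
    rw [hg, hf0]
    have : (fun j => f v (Fin.succ j)) = φ (pr v) := funext fun j => hfs v j
    rw [this, LinearEquiv.symm_apply_apply, hpr, smul_smul,
      show ε * u v * ε = u v by linear_combination (u v) * hε]
    abel
  have hfg : ∀ w, f (g w) = w := by
    intro w
    have hk : u (φ.symm fun j => w (Fin.succ j) : LinearMap.ker u) = 0 := LinearMap.mem_ker.1 (φ.symm _).2
    funext i
    refine Fin.cases ?_ (fun j => ?_) i
    · rw [hf0, hg, map_add, hk, map_smul, map_smul, hub]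
      simp only [smul_eq_mul]
      linear_combination (w 0) * hε
    · rw [hfs, hg, map_add, hprk, map_smul, map_smul, hprb]
      simp
  refine ⟨LinearEquiv.ofLinearMap f g (LinearMap.ext hfg) (LinearMap.ext hgf), hf0, hfs, ?_, ?_⟩
  · change g _ = _
    rw [hg]
    have : (fun j : Fin (m + 1) => (Pi.single 0 1 : Fin (m + 2) → ℝ) (Fin.succ j)) = 0 := by
      funext j; simp
    rw [this]; simp
  · intro j
    change g _ = _
    rw [hg]
    have : (fun i : Fin (m + 1) => (Pi.single (Fin.succ j) 1 : Fin (m + 2) → ℝ) (Fin.succ i)) =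
        Pi.single j 1 := by
      funext i; simp [Pi.single_apply]
    rw [this]; simp

end Partition

/-! ### Equipartition into cones -/

section Partition
variable {n : ℕ} {C : Set (Euc n)}

/-- A quantitative equipartition: if the push-forward of a convex body `C` to an
`(m + 1)`-dimensional space has its centroid at the origin, there are simplicial cones whose duals
cover the dual space and each of which carries a controlled portion of the volume of `C`.  One
bisects `C` by a hyperplane `u = 0`; the two halves have centroids on one line through the origin,
and the induction proceeds in the projection along this line. -/
theorem exists_partition (hn : 1 ≤ n) (m : ℕ) : ∀ (V : Type) [AddCommGroup V] [Module ℝ V]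
    [FiniteDimensional ℝ V], Module.finrank ℝ V = m + 1 → ∀ C : Set (Euc n), Convex ℝ C →
    IsCompact C → volume C ≠ 0 → ∀ p : Euc n →ₗ[ℝ] V, Function.Surjective p →
    (∀ l : V →ₗ[ℝ] ℝ, ∫ x in C, l (p x) = 0) →
    ∃ (ι : Type) (_ : Fintype ι) (φ : ι → V ≃ₗ[ℝ] (Fin (m + 1) → ℝ)),
      (∀ y : V →ₗ[ℝ] ℝ, ∃ i, ∀ j, 0 ≤ y ((φ i).symm (Pi.single j 1))) ∧
      ∑ i, (volume (C ∩ {x | ∀ j, 0 ≤ φ i (p x) j}))⁻¹ ≤ 4 ^ m * (4 * n + 4) / volume C := by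
  induction m with
  | zero =>
    intro V _ _ _ hV C hC hk hv p hp hb
    let φ₀ : V ≃ₗ[ℝ] (Fin 1 → ℝ) := LinearEquiv.ofFinrankEq _ _ (by simp [hV])
    have key : ∀ φ : V ≃ₗ[ℝ] (Fin 1 → ℝ),
        (volume (C ∩ {x | ∀ j, 0 ≤ φ (p x) j}))⁻¹ ≤ (2 * n + 2) / volume C := by
      intro φ
      let X : Euc n →ₗ[ℝ] ℝ := LinearMap.proj 0 ∘ₗ φ.toLinearMap ∘ₗ p
      have h := volume_le_mul_halfspace hn hC hk hv X.toContinuousLinearMap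
        (hb (LinearMap.proj 0 ∘ₗ φ.toLinearMap))
      have e : {x | ∀ j, 0 ≤ φ (p x) j} = {x | 0 ≤ X.toContinuousLinearMap x} := by
        ext x
        simp [X]
      rw [e]
      have hfin : volume C ≠ ∞ := hk.measure_lt_top.ne
      set W := C ∩ {x | 0 ≤ X.toContinuousLinearMap x}
      have hW : volume W ≠ ∞ := measure_ne_top_of_subset Set.inter_subset_left hfin
      have h' : volume C ≤ (2 * n + 2) * volume W := by
        have := ENNReal.ofReal_le_ofReal h
        rw [ENNReal.ofReal_mul (by positivity), Measure.real, Measure.real,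
          ENNReal.ofReal_toReal hfin, ENNReal.ofReal_toReal hW] at this
        convert this using 2
        rw [ENNReal.ofReal_add (by positivity) (by positivity), ENNReal.ofReal_mul (by positivity)]
        simp
      have hW0 : volume W ≠ 0 := by
        intro h0
        rw [h0, mul_zero] at h'
        exact hv (le_antisymm h' zero_le)
      rw [ENNReal.le_div_iff_mul_le (Or.inl hv) (Or.inl hfin), mul_comm]
      refine (mul_le_mul_left h' _).trans ?_
      rw [mul_assoc, ENNReal.mul_inv_cancel hW0 hW, mul_one]
    refine ⟨Bool, inferInstance, fun b => bif b then φ₀ else φ₀.trans (LinearEquiv.neg ℝ), ?_, ?_⟩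
    · intro y
      rcases le_total 0 (y (φ₀.symm (Pi.single 0 1))) with h | h
      · refine ⟨true, fun j => ?_⟩
        rw [show j = 0 from Fin.fin_one_eq_zero j]; exact h
      · refine ⟨false, fun j => ?_⟩
        rw [show j = 0 from Fin.fin_one_eq_zero j]
        have : (φ₀.trans (LinearEquiv.neg ℝ)).symm (Pi.single 0 1) =
            -φ₀.symm (Pi.single 0 1) := by
          rw [LinearEquiv.symm_apply_eq]
          simp
        change 0 ≤ y ((φ₀.trans (LinearEquiv.neg ℝ)).symm (Pi.single 0 1))
        rw [this, map_neg]
        linarith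
    · rw [Fintype.sum_bool]
      refine (add_le_add (key _) (key _)).trans ?_
      rw [← ENNReal.add_div]
      refine ENNReal.div_le_div_right (le_of_eq ?_) _
      ring
  | succ m ih =>
    intro V _ _ _ hV C hC hk hv p hp hb
    have hfin : volume C ≠ ∞ := hk.measure_lt_top.ne
    let φ₀ : V ≃ₗ[ℝ] (Fin (m + 2) → ℝ) := LinearEquiv.ofFinrankEq _ _ (by simp [hV])
    let u₀ : V →ₗ[ℝ] ℝ := LinearMap.proj 0 ∘ₗ φ₀.toLinearMap
    let u₁ : V →ₗ[ℝ] ℝ := LinearMap.proj 1 ∘ₗ φ₀.toLinearMap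
    have hne : ∀ c s : ℝ, c ^ 2 + s ^ 2 = 1 → c • (u₀ ∘ₗ p) + s • (u₁ ∘ₗ p) ≠ 0 := by
      intro c s hcs h
      obtain ⟨x, hx⟩ := hp (φ₀.symm (Pi.single 0 c + Pi.single 1 s))
      have h1 := LinearMap.congr_fun h x
      simp [u₀, u₁, hx] at h1
      nlinarith
    obtain ⟨c, s, hcs, h₁, h₂⟩ := exists_bisect hk (u₀ ∘ₗ p) (u₁ ∘ₗ p) hne
    set u : V →ₗ[ℝ] ℝ := c • u₀ + s • u₁ with hu
    have hup : c • (u₀ ∘ₗ p) + s • (u₁ ∘ₗ p) = u ∘ₗ p := rfl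
    have hu0 : u ∘ₗ p ≠ 0 := by rw [← hup]; exact hne c s hcs
    rw [hup] at h₁ h₂
    have hclosed₁ : IsClosed {x | 0 ≤ (u ∘ₗ p) x} :=
      isClosed_le continuous_const (LinearMap.continuous_of_finiteDimensional _)
    have hclosed₂ : IsClosed {x | (u ∘ₗ p) x ≤ 0} :=
      isClosed_le (LinearMap.continuous_of_finiteDimensional _) continuous_const
    set C₁ := C ∩ {x | 0 ≤ (u ∘ₗ p) x} with hC₁
    set C₂ := C ∩ {x | (u ∘ₗ p) x ≤ 0} with hC₂
    have hk₁ : IsCompact C₁ := hk.inter_right hclosed₁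
    have hk₂ : IsCompact C₂ := hk.inter_right hclosed₂
    have hc₁ : Convex ℝ C₁ := hC.inter (convex_halfSpace_ge (u ∘ₗ p).isLinear 0)
    have hc₂ : Convex ℝ C₂ := hC.inter (convex_halfSpace_le (u ∘ₗ p).isLinear 0)
    have hhalf : volume C / 2 ≠ 0 := by simp [hv]
    have hv₁ : volume C₁ ≠ 0 := by rw [h₁]; exact hhalf
    have hv₂ : volume C₂ ≠ 0 := by rw [h₂]; exact hhalf
    -- the two halves have opposite first moments `b₀` and `-b₀`
    set b₀ : V := p (∫ x in C₁, x) with hb₀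
    have hitg₁ : ∀ l : V →ₗ[ℝ] ℝ, ∫ x in C₁, l (p x) = l b₀ := fun l =>
      integral_linear hk₁ (l ∘ₗ p)
    have hitg₂ : ∀ l : V →ₗ[ℝ] ℝ, ∫ x in C₂, l (p x) = -l b₀ := by
      intro l
      have hcont : Continuous fun x => l (p x) := (l ∘ₗ p).continuous_of_finiteDimensional
      have h := setIntegral_union₀ (μ := volume) (f := fun x => l (p x)) (s := C₁) (t := C₂) (by
          refine measure_mono_null ?_ (volume_ker_eq_zero hu0)
          exact fun x hx => le_antisymm hx.2.2 hx.1.2) hk₂.measurableSet.nullMeasurableSet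
        (hcont.continuousOn.integrableOn_compact hk₁) (hcont.continuousOn.integrableOn_compact hk₂)
      have hun : C₁ ∪ C₂ = C := by
        rw [hC₁, hC₂, ← Set.inter_union_distrib_left]
        refine Set.inter_eq_left.2 fun x _ => ?_
        exact le_total 0 ((u ∘ₗ p) x)
      rw [hun, hb l, hitg₁] at h
      linarith
    have hub₀ : 0 < u b₀ := by
      rw [← hitg₁ u]
      have hcont : Continuous fun x => u (p x) := (u ∘ₗ p).continuous_of_finiteDimensional
      refine (setIntegral_pos_iff_support_of_nonneg_ae ?_
        (hcont.continuousOn.integrableOn_compact hk₁)).2 ?_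
      · filter_upwards [ae_restrict_mem hk₁.measurableSet] with x hx using hx.2
      · have h3 : volume C₁ ≤ volume (Function.support (fun x => u (p x)) ∩ C₁) +
            volume {x | (u ∘ₗ p) x = 0} := by
          refine (measure_mono fun x hx => ?_).trans (measure_union_le _ _)
          by_cases h0 : u (p x) = 0
          · exact Or.inr h0
          · exact Or.inl ⟨h0, hx⟩
        rw [volume_ker_eq_zero hu0, add_zero] at h3
        exact (pos_iff_ne_zero.2 hv₁).trans_le h3
    set b : V := (u b₀)⁻¹ • b₀ with hbdef
    have hub : u b = 1 := by
      rw [hbdef, map_smul, smul_eq_mul, inv_mul_cancel₀ hub₀.ne']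
    let pr : V →ₗ[ℝ] LinearMap.ker u := LinearMap.codRestrict _ (LinearMap.id - u.smulRight b)
      (fun v => by simp [LinearMap.mem_ker, hub])
    have hpr : ∀ v, (pr v : V) = v - u v • b := fun v => rfl
    have hprs : Function.Surjective pr := fun k => ⟨k, by
      apply Subtype.ext
      rw [hpr, LinearMap.mem_ker.1 k.2]; simp⟩
    have hprb : pr b₀ = 0 := by
      apply Subtype.ext
      rw [hpr, hbdef, smul_smul, mul_inv_cancel₀ hub₀.ne']; simp
    have hrank : Module.finrank ℝ (LinearMap.ker u) = m + 1 := by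
      have h := LinearMap.finrank_range_add_finrank_ker u
      have hs : LinearMap.range u = ⊤ := LinearMap.range_eq_top.2 fun r =>
        ⟨r • b, by rw [map_smul, hub, smul_eq_mul, mul_one]⟩
      rw [hs, finrank_top, Module.finrank_self, hV] at h
      omega
    -- both halves are centered after projecting along `b`
    obtain ⟨ι₁, _, φ₁, hy₁, hs₁⟩ := ih (LinearMap.ker u) hrank C₁ hc₁ hk₁ hv₁ (pr ∘ₗ p)
      (hprs.comp hp) (fun l => by
        have := hitg₁ (l ∘ₗ pr)
        simpa [hprb] using this)
    obtain ⟨ι₂, _, φ₂, hy₂, hs₂⟩ := ih (LinearMap.ker u) hrank C₂ hc₂ hk₂ hv₂ (pr ∘ₗ p)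
      (hprs.comp hp) (fun l => by
        have := hitg₂ (l ∘ₗ pr)
        simpa [hprb] using this)
    choose Φ₁ h10 h1s h1b h1e using fun i =>
      exists_extend_coords u b hub pr hpr (φ₁ i) (ε := 1) (by norm_num)
    choose Φ₂ h20 h2s h2b h2e using fun i =>
      exists_extend_coords u b hub pr hpr (φ₂ i) (ε := -1) (by norm_num)
    -- the generator `b` is added to the cones of the first half, and `-b` to those of the second
    refine ⟨ι₁ ⊕ ι₂, inferInstance, Sum.elim Φ₁ Φ₂, fun y => ?_, ?_⟩
    · rcases le_total 0 (y b) with h | h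
      · obtain ⟨i, hi⟩ := hy₁ (y ∘ₗ (LinearMap.ker u).subtype)
        refine ⟨Sum.inl i, fun j => ?_⟩
        rw [Sum.elim_inl]
        refine Fin.cases ?_ (fun j => ?_) j
        · rw [h1b, one_smul]; exact h
        · rw [h1e]; exact hi j
      · obtain ⟨i, hi⟩ := hy₂ (y ∘ₗ (LinearMap.ker u).subtype)
        refine ⟨Sum.inr i, fun j => ?_⟩
        rw [Sum.elim_inr]
        refine Fin.cases ?_ (fun j => ?_) j
        · rw [h2b, neg_one_smul, map_neg]; linarith
        · rw [h2e]; exact hi j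
    · have e₁ : ∀ i, C ∩ {x | ∀ j, 0 ≤ Φ₁ i (p x) j} = C₁ ∩ {x | ∀ j, 0 ≤ φ₁ i ((pr ∘ₗ p) x) j} := by
        intro i
        ext x
        simp only [hC₁, Set.mem_inter_iff, Set.mem_ofPred_eq, Fin.forall_fin_succ (n := m + 1), h10,
          h1s, one_mul, LinearMap.comp_apply, and_assoc]
      have e₂ : ∀ i, C ∩ {x | ∀ j, 0 ≤ Φ₂ i (p x) j} = C₂ ∩ {x | ∀ j, 0 ≤ φ₂ i ((pr ∘ₗ p) x) j} := by
        intro i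
        ext x
        simp only [hC₂, Set.mem_inter_iff, Set.mem_ofPred_eq, Fin.forall_fin_succ (n := m + 1), h20,
          h2s, neg_one_mul, neg_nonneg, LinearMap.comp_apply, and_assoc]
      rw [Fintype.sum_sum_type]
      simp only [Sum.elim_inl, Sum.elim_inr, e₁, e₂]
      refine (add_le_add hs₁ hs₂).trans (le_of_eq ?_)
      rw [h₁, h₂, ← ENNReal.add_div, div_eq_mul_inv, div_eq_mul_inv, div_eq_mul_inv,
        ENNReal.mul_inv (Or.inr (by norm_num)) (Or.inr (by norm_num)), inv_inv]
      ring

/-- The Laplace integral of the support function of a centered convex body, bounded by summing the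
estimate `volume_inter_cone_mul_le` over a partition. -/
theorem lintegral_exp_neg_supp_mul_volume_le (hn : 1 ≤ n) (hC : Convex ℝ C) (hk : IsCompact C)
    (hv : volume C ≠ 0) (hb : ∫ x in C, x = 0) :
    (∫⁻ y, ENNReal.ofReal (Real.exp (-supp C y))) * volume C ≤
      ENNReal.ofReal (Real.exp n) * (4 ^ n * (n + 1)) := by
  obtain ⟨m, rfl⟩ : ∃ m, n = m + 1 := ⟨n - 1, by omega⟩
  have hfin : volume C ≠ ∞ := hk.measure_lt_top.ne
  obtain ⟨ι, _, φ, hcov, hsum⟩ := exists_partition hn m (Euc (m + 1)) (by simp) C hC hk hv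
    LinearMap.id Function.surjective_id (fun l => by
      have := integral_linear hk l
      simpa [hb] using this)
  simp only [LinearMap.id_apply] at hsum
  set Y : ι → Set (Euc (m + 1)) := fun i => {y | ∀ j, 0 ≤ ⟪(φ i).symm (Pi.single j 1), y⟫}
  have hY : (⋃ i, Y i) = Set.univ := by
    refine Set.eq_univ_of_forall fun y => Set.mem_iUnion.2 ?_
    obtain ⟨i, hi⟩ := hcov (innerₛₗ ℝ y)
    exact ⟨i, fun j => by rw [real_inner_comm]; exact hi j⟩
  have hvi : ∀ i, volume (C ∩ {x | ∀ j, 0 ≤ φ i x j}) ≠ 0 := by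
    intro i h0
    have h1 : ∑ i, (volume (C ∩ {x | ∀ j, 0 ≤ φ i x j}))⁻¹ = ∞ :=
      ENNReal.sum_eq_top.2 ⟨i, Finset.mem_univ i, by rw [h0, ENNReal.inv_zero]⟩
    rw [h1, top_le_iff] at hsum
    refine ENNReal.div_ne_top ?_ hv hsum
    exact ENNReal.mul_ne_top (by simp) (by simp [ENNReal.add_eq_top, ENNReal.mul_eq_top])
  have h1 : ∫⁻ y, ENNReal.ofReal (Real.exp (-supp C y)) ≤
      ENNReal.ofReal (Real.exp (m + 1 : ℕ)) *
        ∑ i, (volume (C ∩ {x | ∀ j, 0 ≤ φ i x j}))⁻¹ := by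
    calc ∫⁻ y, ENNReal.ofReal (Real.exp (-supp C y))
        = ∫⁻ y in ⋃ i, Y i, ENNReal.ofReal (Real.exp (-supp C y)) := by
          rw [hY, Measure.restrict_univ]
      _ ≤ ∑' i, ∫⁻ y in Y i, ENNReal.ofReal (Real.exp (-supp C y)) := lintegral_iUnion_le _ _
      _ = ∑ i, ∫⁻ y in Y i, ENNReal.ofReal (Real.exp (-supp C y)) := tsum_fintype _
      _ ≤ _ := by
          rw [Finset.mul_sum]
          refine Finset.sum_le_sum fun i _ => ?_
          rw [← div_eq_mul_inv, ENNReal.le_div_iff_mul_le (Or.inl (hvi i))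
            (Or.inl (measure_ne_top_of_subset Set.inter_subset_left hfin)), mul_comm]
          exact volume_inter_cone_mul_le hC hk (φ i)
  calc _ ≤ (ENNReal.ofReal (Real.exp (m + 1 : ℕ)) *
        (4 ^ m * (4 * (m + 1 : ℕ) + 4) / volume C)) * volume C := by gcongr; exact h1.trans (by gcongr)
    _ = ENNReal.ofReal (Real.exp (m + 1 : ℕ)) * (4 ^ m * (4 * (m + 1 : ℕ) + 4)) := by
        rw [mul_assoc, ENNReal.div_mul_cancel hv hfin]
    _ = _ := by ring

end Partition

/-! ### Polar bodies, packing and covering -/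

section Packing
variable {n : ℕ}

lemma ofReal_exp_neg_eq_lintegral {a : ℝ} (ha : 0 ≤ a) :
    ENNReal.ofReal (Real.exp (-a)) =
      ∫⁻ r in Set.Ioi (0 : ℝ), (Set.Ici a).indicator (fun r => ENNReal.ofReal (Real.exp (-r))) r := by
  have e : (Set.Ici a ∩ Set.Ioi 0 : Set ℝ) =ᵐ[volume] Set.Ioi a := by
    have h : (Set.Ici a ∩ Set.Ioi 0 : Set ℝ) =ᵐ[volume] (Set.Ioi a ∩ Set.Ioi 0 : Set ℝ) :=
      Ioi_ae_eq_Ici.symm.inter (Filter.EventuallyEq.refl _ _)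
    rwa [Set.inter_eq_left.2 (Set.Ioi_subset_Ioi ha)] at h
  rw [lintegral_indicator measurableSet_Ici, Measure.restrict_restrict measurableSet_Ici,
    setLIntegral_congr e, ← ofReal_integral_eq_lintegral_ofReal, integral_exp_neg_Ioi]
  · have h : IntegrableOn (fun r : ℝ => Real.exp (-r)) (Set.Ioi a) := by
      simpa using integrableOn_exp_mul_Ioi (a := -1) (by norm_num) a
    exact h
  · exact Filter.Eventually.of_forall fun r => (Real.exp_pos _).le

lemma lintegral_exp_neg_mul_pow (n : ℕ) :
    ∫⁻ r in Set.Ioi (0 : ℝ), ENNReal.ofReal (Real.exp (-r)) * ENNReal.ofReal (r ^ n) =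
      (n.factorial : ℝ≥0∞) := by
  have hg : ∀ r : ℝ, Real.exp (-r) * r ^ n = Real.exp (-r) * r ^ ((n + 1 : ℝ) - 1) := by
    intro r; rw [add_sub_cancel_right, Real.rpow_natCast]
  have hi := Real.GammaIntegral_convergent (s := (n : ℝ) + 1) (by positivity)
  have h := Real.Gamma_eq_integral (s := (n : ℝ) + 1) (by positivity)
  rw [Real.Gamma_nat_eq_factorial] at h
  simp only [← hg] at h hi
  rw [← ENNReal.ofReal_natCast, h, ofReal_integral_eq_lintegral_ofReal hi]
  · refine lintegral_congr fun r => ?_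
    rw [ENNReal.ofReal_mul (Real.exp_pos _).le]
  · filter_upwards [ae_restrict_mem measurableSet_Ioi] with r hr
    have : (0 : ℝ) < r := hr
    positivity

/-- The Laplace integral of a gauge is a dimensional multiple of the volume of its unit ball. -/
lemma lintegral_exp_neg_eq_volume {h : Euc n → ℝ} (hm : Measurable h) (h0 : ∀ y, 0 ≤ h y)
    (hh : ∀ r : ℝ, 0 < r → ∀ y, h (r • y) = r * h y) :
    ∫⁻ y, ENNReal.ofReal (Real.exp (-h y)) = n.factorial * volume {y | h y ≤ 1} := by
  have hmeas : Measurable (fun q : Euc n × ℝ =>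
      (Set.Ici (h q.1)).indicator (fun r => ENNReal.ofReal (Real.exp (-r))) q.2) := by
    have : (fun q : Euc n × ℝ =>
      (Set.Ici (h q.1)).indicator (fun r => ENNReal.ofReal (Real.exp (-r))) q.2) =
      {q : Euc n × ℝ | h q.1 ≤ q.2}.indicator (fun q => ENNReal.ofReal (Real.exp (-q.2))) := by
      funext q
      by_cases hq : h q.1 ≤ q.2 <;> simp [hq]
    rw [this]
    exact Measurable.indicator (by fun_prop)
      (measurableSet_le (hm.comp measurable_fst) measurable_snd)
  have hball : ∀ r : ℝ, 0 < r →
      volume {y | h y ≤ r} = ENNReal.ofReal (r ^ n) * volume {y | h y ≤ 1} := by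
    intro r hr
    have e : {y | h y ≤ r} = r • {y | h y ≤ 1} := by
      ext y
      rw [Set.mem_smul_set_iff_inv_smul_mem₀ hr.ne', Set.mem_ofPred_eq, Set.mem_ofPred_eq,
        hh _ (inv_pos.2 hr), inv_mul_le_iff₀ hr, mul_one]
    rw [e, Measure.addHaar_smul, finrank_euclideanSpace, Fintype.card_fin,
      abs_of_nonneg (by positivity)]
  calc ∫⁻ y, ENNReal.ofReal (Real.exp (-h y))
      = ∫⁻ y, ∫⁻ r in Set.Ioi (0 : ℝ),
          (Set.Ici (h y)).indicator (fun r => ENNReal.ofReal (Real.exp (-r))) r :=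
        lintegral_congr fun y => ofReal_exp_neg_eq_lintegral (h0 y)
    _ = ∫⁻ r in Set.Ioi (0 : ℝ), ∫⁻ y,
          (Set.Ici (h y)).indicator (fun r => ENNReal.ofReal (Real.exp (-r))) r :=
        lintegral_lintegral_swap hmeas.aemeasurable
    _ = ∫⁻ r in Set.Ioi (0 : ℝ), ENNReal.ofReal (Real.exp (-r)) * ENNReal.ofReal (r ^ n) *
          volume {y | h y ≤ 1} := by
        refine setLIntegral_congr_fun measurableSet_Ioi fun r hr => ?_
        have e : ∀ y, (Set.Ici (h y)).indicator (fun r => ENNReal.ofReal (Real.exp (-r))) r =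
            {y | h y ≤ r}.indicator (fun _ => ENNReal.ofReal (Real.exp (-r))) y := by
          intro y
          by_cases hy : h y ≤ r <;> simp [hy]
        simp only [e]
        rw [lintegral_indicator_const (measurableSet_le hm measurable_const), hball r hr, mul_assoc]
    _ = _ := by
        rw [lintegral_mul_const _ (by fun_prop), lintegral_exp_neg_mul_pow]

lemma polarBody_eq {K : Set (Euc n)} (hk : IsCompact K) (hne : K.Nonempty) :
    polarBody K = {y | supp K y ≤ 1} := by
  ext y
  constructor
  · intro hy
    exact supp_le hne fun x hx => by rw [real_inner_comm]; exact hy x hx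
  · intro hy x hx
    rw [real_inner_comm]
    exact (le_supp hk hx y).trans hy

lemma convex_polarBody (K : Set (Euc n)) : Convex ℝ (polarBody K) := by
  intro x hx y hy a b ha hb hab z hz
  rw [inner_add_left, real_inner_smul_left, real_inner_smul_left]
  have h1 := mul_le_mul_of_nonneg_left (hx z hz) ha
  have h2 := mul_le_mul_of_nonneg_left (hy z hz) hb
  linarith

lemma lintegral_exp_neg_supp {K : Set (Euc n)} (hk : IsCompact K) (h0 : (0 : Euc n) ∈ K) :
    ∫⁻ y, ENNReal.ofReal (Real.exp (-supp K y)) = n.factorial * volume (polarBody K) := by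
  rw [polarBody_eq hk ⟨0, h0⟩]
  exact lintegral_exp_neg_eq_volume (continuous_supp hk ⟨0, h0⟩).measurable (supp_nonneg hk h0)
    fun r hr y => supp_smul hk ⟨0, h0⟩ hr.le y

/-- Translates of `B` by a maximal `B`-separated family in `A` cover `A`, and the copies
`(2/3) y + (1/3) D` of a subset `D` of `A ∩ B` are disjoint inside `A`. -/
lemma exists_cover_of_packing {A B D : Set (Euc n)} (hA : Convex ℝ A) (hB : Convex ℝ B)
    (hBs : ∀ x ∈ B, -x ∈ B) (hDm : MeasurableSet D) (hDA : D ⊆ A) (hDB : D ⊆ B)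
    (hv : volume D ≠ 0) (hf : volume A ≠ ∞) :
    ∃ S : Finset (Euc n), A ⊆ ↑S + B ∧ S.card * volume D ≤ 3 ^ n * volume A := by
  classical
  set Sep : Finset (Euc n) → Prop := fun S => ↑S ⊆ A ∧ ∀ x ∈ S, ∀ y ∈ S, x ≠ y → x - y ∉ B
    with hSep
  have hD0 : volume D ≠ ∞ := measure_ne_top_of_subset hDA hf
  have key : ∀ S, Sep S → S.card * volume D ≤ 3 ^ n * volume A := by
    intro S hS
    set f : Euc n → Set (Euc n) := fun y => (2 / 3 : ℝ) • y +ᵥ ((1 / 3 : ℝ) • D) with hf'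
    have hmem : ∀ y z, z ∈ f y → ∃ w ∈ D, (2 / 3 : ℝ) • y + (1 / 3 : ℝ) • w = z := by
      rintro y z ⟨_, ⟨w, hw, rfl⟩, rfl⟩
      exact ⟨w, hw, rfl⟩
    have hvol : ∀ y, volume (f y) = ENNReal.ofReal ((1 / 3) ^ n) * volume D := by
      intro y
      rw [hf', measure_vadd, Measure.addHaar_smul, finrank_euclideanSpace, Fintype.card_fin,
        abs_of_nonneg (by positivity)]
    have hdisj : Set.PairwiseDisjoint (↑S) f := by
      intro x hx y hy hxy
      rw [Function.onFun, Set.disjoint_left]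
      intro z hzx hzy
      obtain ⟨w, hw, h1⟩ := hmem x z hzx
      obtain ⟨w', hw', h2⟩ := hmem y z hzy
      refine hS.2 x hx y hy hxy ?_
      have e : x - y = (1 / 2 : ℝ) • w' + (1 / 2 : ℝ) • (-w) := by
        have h3 : (2 / 3 : ℝ) • x + (1 / 3 : ℝ) • w = (2 / 3 : ℝ) • y + (1 / 3 : ℝ) • w' :=
          h1.trans h2.symm
        have h4 : x - y = (3 / 2 : ℝ) • (((2 / 3 : ℝ) • x + (1 / 3 : ℝ) • w) -
            ((2 / 3 : ℝ) • y + (1 / 3 : ℝ) • w)) := by module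
        rw [h4, h3]; module
      rw [e]
      exact hB (hDB hw') (hBs _ (hDB hw)) (by norm_num) (by norm_num) (by norm_num)
    have hsub : (⋃ y ∈ S, f y) ⊆ A := by
      intro z hz
      simp only [Set.mem_iUnion] at hz
      obtain ⟨y, hy, hz⟩ := hz
      obtain ⟨w, hw, rfl⟩ := hmem y z hz
      exact hA (hS.1 hy) (hDA hw) (by norm_num) (by norm_num) (by norm_num)
    have h1 := measure_mono (μ := volume) hsub
    rw [measure_biUnion_finset hdisj fun y _ => (hDm.const_smul₀ (1 / 3 : ℝ)).const_vadd _] at h1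
    simp only [hvol, Finset.sum_const, nsmul_eq_mul] at h1
    have h3 : (3 : ℝ≥0∞) ^ n * ENNReal.ofReal ((1 / 3) ^ n) = 1 := by
      rw [← ENNReal.ofReal_ofNat 3, ← ENNReal.ofReal_pow (by norm_num),
        ← ENNReal.ofReal_mul (by positivity), ← mul_pow]
      norm_num
    calc S.card * volume D = (3 ^ n * ENNReal.ofReal ((1 / 3) ^ n)) * (S.card * volume D) := by
          rw [h3, one_mul]
      _ = 3 ^ n * (S.card * (ENNReal.ofReal ((1 / 3) ^ n) * volume D)) := by ring
      _ ≤ _ := by gcongr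
  set Q : Set ℕ := {k | ∃ S, Sep S ∧ S.card = k} with hQ
  have hQne : Q.Nonempty := ⟨0, ∅, ⟨by simp, by simp⟩, rfl⟩
  have hQb : BddAbove Q := by
    have hfin : 3 ^ n * volume A / volume D ≠ ∞ :=
      ENNReal.div_ne_top (ENNReal.mul_ne_top (by simp) hf) hv
    obtain ⟨N, hN⟩ := ENNReal.exists_nat_gt hfin
    refine ⟨N, ?_⟩
    rintro k ⟨S, hS, rfl⟩
    have := (ENNReal.le_div_iff_mul_le (Or.inl hv) (Or.inl hD0)).2 (key S hS)
    exact_mod_cast (this.trans_lt hN).le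
  obtain ⟨S, hS, hcard⟩ := Nat.sSup_mem hQne hQb
  refine ⟨S, fun z hz => ?_, key S hS⟩
  by_contra hcon
  have hz' : ∀ y ∈ S, z - y ∉ B := by
    intro y hy hzy
    exact hcon ⟨y, hy, z - y, hzy, by simp⟩
  have hzS : z ∉ S ∨ (0 : Euc n) ∉ B := by
    by_contra! h
    exact hz' z h.1 (by simpa using h.2)
  have h0B : (0 : Euc n) ∈ B := by
    obtain ⟨w, hw⟩ := nonempty_of_measure_ne_zero hv
    have := hB (hDB hw) (hBs _ (hDB hw)) (by norm_num : (0 : ℝ) ≤ 1 / 2)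
      (by norm_num : (0 : ℝ) ≤ 1 / 2) (by norm_num)
    simpa using this
  have hzS' : z ∉ S := hzS.resolve_right (not_not.2 h0B)
  have hnew : Sep (insert z S) := by
    refine ⟨?_, ?_⟩
    · rw [Finset.coe_insert]; exact Set.insert_subset hz hS.1
    · intro x hx y hy hxy
      rw [Finset.mem_insert] at hx hy
      rcases hx with rfl | hx <;> rcases hy with rfl | hy
      · exact absurd rfl hxy
      · exact hz' y hy
      · intro h
        exact hz' x hx (by simpa using hBs _ h)
      · exact hS.2 x hx y hy hxy
  have := le_csSup hQb ⟨insert z S, hnew, rfl⟩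
  rw [Finset.card_insert_of_notMem hzS', hcard] at this
  omega

end Packing

/-! ### Difference bodies -/

section DifferenceBody
variable {n : ℕ} {K T : Set (Euc n)}

/-- An elementary form of the Rogers–Shephard inequality: for `x` in half of `2 • K - K` the
intersection of `2 • K` with `x + K` contains a translate of `K / 2`, while these intersections have
total volume `vol (2 • K) * vol K`. -/
lemma volume_two_smul_sub_le (hc : Convex ℝ K) (hk : IsCompact K) (h0 : (0 : Euc n) ∈ K)
    (hv : volume K ≠ 0) : volume ((2 : ℝ) • K - K) ≤ 8 ^ n * volume K := by
  have hfin : volume K ≠ ∞ := hk.measure_lt_top.ne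
  set A := (2 : ℝ) • K with hA
  have hAk : IsCompact A := hk.smul 2
  have hAm : MeasurableSet A := hAk.measurableSet
  have hKm : MeasurableSet K := hk.measurableSet
  set H := (1 / 2 : ℝ) • (A - K) with hH
  have hHm : MeasurableSet H := by
    rw [hH, sub_eq_add_neg]
    exact ((hAk.add hk.neg).smul (1 / 2 : ℝ)).measurableSet
  have hscale : ∀ (r : ℝ) (s : Set (Euc n)), 0 ≤ r →
      volume (r • s) = ENNReal.ofReal (r ^ n) * volume s := by
    intro r s hr
    rw [Measure.addHaar_smul, finrank_euclideanSpace, Fintype.card_fin,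
      abs_of_nonneg (by positivity)]
  set F : Euc n → Euc n → ℝ≥0∞ := fun x z => A.indicator 1 z * K.indicator 1 (z - x) with hF
  have hFm : Measurable (Function.uncurry F) := by
    have h1 : Measurable (A.indicator (1 : Euc n → ℝ≥0∞)) := measurable_one.indicator hAm
    have h2 : Measurable (K.indicator (1 : Euc n → ℝ≥0∞)) := measurable_one.indicator hKm
    exact (h1.comp measurable_snd).mul (h2.comp (measurable_snd.sub measurable_fst))
  have htot : ∫⁻ x, ∫⁻ z, F x z = volume A * volume K := by
    rw [lintegral_lintegral_swap hFm.aemeasurable]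
    have h1 : Measurable (A.indicator (1 : Euc n → ℝ≥0∞)) := measurable_one.indicator hAm
    have h2 : Measurable (K.indicator (1 : Euc n → ℝ≥0∞)) := measurable_one.indicator hKm
    have e : ∀ z, ∫⁻ x, F x z = A.indicator 1 z * volume K := by
      intro z
      simp only [hF]
      rw [lintegral_const_mul (f := fun x => K.indicator 1 (z - x)) _
          (h2.comp (measurable_const.sub measurable_id)),
        lintegral_sub_left_eq_self (K.indicator (1 : Euc n → ℝ≥0∞)) z, lintegral_indicator_one hKm]
    simp only [e]
    rw [lintegral_mul_const _ h1, lintegral_indicator_one hAm]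
  have hlow : ∀ x ∈ H, volume ((1 / 2 : ℝ) • K) ≤ ∫⁻ z, F x z := by
    rintro x ⟨_, ⟨_, ⟨k₁, hk₁, rfl⟩, k₂, hk₂, rfl⟩, hx⟩
    have hx' : x = (1 / 2 : ℝ) • ((2 : ℝ) • k₁ - k₂) := hx.symm
    have hm : MeasurableSet (k₁ +ᵥ (1 / 2 : ℝ) • K) :=
      ((hk.smul (1 / 2 : ℝ)).measurableSet).const_vadd _
    rw [← measure_vadd volume k₁ ((1 / 2 : ℝ) • K), ← lintegral_indicator_one hm]
    refine lintegral_mono fun z => ?_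
    by_cases hz : z ∈ k₁ +ᵥ (1 / 2 : ℝ) • K
    · rw [Set.indicator_of_mem hz]
      obtain ⟨_, ⟨k, hkk, rfl⟩, hzk⟩ := hz
      have hz' : z = k₁ + (1 / 2 : ℝ) • k := hzk.symm
      have hzA : z ∈ A := by
        have hm1 : (1 / 2 : ℝ) • k + (1 / 2 : ℝ) • (0 : Euc n) ∈ K :=
          hc hkk h0 (by norm_num) (by norm_num) (by norm_num)
        have hm2 := hc hk₁ hm1 (by norm_num : (0 : ℝ) ≤ 1 / 2) (by norm_num : (0 : ℝ) ≤ 1 / 2)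
          (by norm_num)
        refine ⟨_, hm2, ?_⟩
        change (2 : ℝ) • _ = z
        rw [hz']
        module
      have hzK : z - x ∈ K := by
        have hm2 := hc hk₂ hkk (by norm_num : (0 : ℝ) ≤ 1 / 2) (by norm_num : (0 : ℝ) ≤ 1 / 2)
          (by norm_num)
        convert hm2 using 1
        rw [hx', hz']
        module
      simp only [hF]
      rw [Set.indicator_of_mem hzA, Set.indicator_of_mem hzK]
      simp
    · rw [Set.indicator_of_notMem hz]; exact zero_le
  have h1 : volume ((1 / 2 : ℝ) • K) * volume H ≤ volume A * volume K := by
    rw [← htot, ← setLIntegral_const]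
    exact (setLIntegral_mono' hHm hlow).trans (setLIntegral_le_lintegral _ _)
  rw [hscale _ _ (by norm_num), hH, hscale _ _ (by norm_num), hA, hscale _ _ (by norm_num)] at h1
  set D := volume ((2 : ℝ) • K - K)
  have c1 : (4 : ℝ≥0∞) ^ n * (ENNReal.ofReal ((1 / 2) ^ n) * ENNReal.ofReal ((1 / 2) ^ n)) = 1 := by
    rw [← ENNReal.ofReal_ofNat 4, ← ENNReal.ofReal_pow (by norm_num),
      ← ENNReal.ofReal_mul (by positivity), ← ENNReal.ofReal_mul (by positivity), ← mul_pow,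
      ← mul_pow]
    norm_num
  have c2 : (4 : ℝ≥0∞) ^ n * ENNReal.ofReal (2 ^ n) = 8 ^ n := by
    rw [ENNReal.ofReal_pow (by norm_num), ENNReal.ofReal_ofNat, ← mul_pow]
    norm_num
  rw [← ENNReal.mul_le_mul_iff_left hv hfin]
  calc D * volume K = (4 ^ n * (ENNReal.ofReal ((1 / 2) ^ n) * ENNReal.ofReal ((1 / 2) ^ n))) *
        (D * volume K) := by rw [c1, one_mul]
    _ = 4 ^ n * ((ENNReal.ofReal ((1 / 2) ^ n) * volume K) *
        (ENNReal.ofReal ((1 / 2) ^ n) * D)) := by ring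
    _ ≤ 4 ^ n * (ENNReal.ofReal (2 ^ n) * volume K * volume K) := by gcongr
    _ = (4 ^ n * ENNReal.ofReal (2 ^ n)) * volume K * volume K := by ring
    _ = _ := by rw [c2]

/-- The volume of `K - K + T` in terms of a cover of `T` by translates of `K`. -/
lemma volume_sub_add_le (hc : Convex ℝ K) (hk : IsCompact K) (h0 : (0 : Euc n) ∈ K)
    (hv : volume K ≠ 0) {Λ : Finset (Euc n)} (hT : T ⊆ ↑Λ + K) :
    volume (K - K + T) ≤ Λ.card * (8 ^ n * volume K) := by
  have hsub : K - K + T ⊆ ⋃ l ∈ Λ, l +ᵥ ((2 : ℝ) • K - K) := by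
    rintro _ ⟨_, ⟨k, hkk, k', hk', rfl⟩, t, ht, rfl⟩
    obtain ⟨l, hl, k'', hk'', rfl⟩ := hT ht
    simp only [Set.mem_iUnion]
    refine ⟨l, hl, (2 : ℝ) • ((1 / 2 : ℝ) • k + (1 / 2 : ℝ) • k'') - k',
      ⟨_, ⟨_, hc hkk hk'' (by norm_num) (by norm_num) (by norm_num), rfl⟩, k', hk', rfl⟩, ?_⟩
    change l + _ = k - k' + (l + k'')
    module
  refine (measure_mono hsub).trans ((measure_biUnion_finset_le _ _).trans ?_)
  simp only [measure_vadd, Finset.sum_const, nsmul_eq_mul]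
  gcongr
  exact volume_two_smul_sub_le hc hk h0 hv

lemma exists_closedBall_subset (hc : Convex ℝ T) (hi : (interior T).Nonempty)
    (hs : ∀ x ∈ T, -x ∈ T) : ∃ r > 0, Metric.closedBall 0 r ⊆ T := by
  obtain ⟨p, hp⟩ := hi
  obtain ⟨r, hr, hb⟩ := Metric.nhds_basis_closedBall.mem_iff.1 (mem_interior_iff_mem_nhds.1 hp)
  refine ⟨r, hr, fun v hv => ?_⟩
  rw [mem_closedBall_zero_iff] at hv
  have h1 : p + v ∈ T := hb (by simpa [Metric.mem_closedBall, dist_eq_norm] using hv)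
  have h2 : p - v ∈ T := hb (by simpa [Metric.mem_closedBall, dist_eq_norm] using hv)
  have h3 := hc h1 (hs _ h2) (by norm_num : (0 : ℝ) ≤ 1 / 2) (by norm_num : (0 : ℝ) ≤ 1 / 2)
    (by norm_num)
  convert h3 using 1
  module

end DifferenceBody

/-! ### The inertial ellipsoid -/

section Inertia
variable {n : ℕ} {K : Set (Euc n)}

lemma inner_eq_sum (x y : Euc n) : ⟪x, y⟫ = ∑ i, x i * y i := by
  rw [PiLp.inner_apply]
  exact Finset.sum_congr rfl fun i _ => by simp [mul_comm]

/-- The covariance form as an integral. -/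
lemma covMatrix_form (hk : IsCompact K) (y z : Euc n) :
    ∑ i, ∑ j, y i * covMatrix K i j * z j =
      (volume K).toReal⁻¹ * ∫ x in K, ⟪x - centroid K, y⟫ * ⟪x - centroid K, z⟫ := by
  set b := centroid K with hb
  have hitg : ∀ f : Euc n → ℝ, Continuous f → IntegrableOn f K := fun f hf =>
    hf.continuousOn.integrableOn_compact hk
  have hint' : ∀ i j : Fin n, IntegrableOn (fun x : Euc n => (x i - b i) * (x j - b j)) K :=
    fun i j => hitg _ (by fun_prop)
  have hC : ∀ i j, covMatrix K i j =
      (volume K).toReal⁻¹ * ∫ x in K, (x i - b i) * (x j - b j) := by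
    intro i j
    change (volume K).toReal⁻¹ *
      (∫ x in K, fun i j => (x i - centroid K i) * (x j - centroid K j)) i j = _
    rw [← hb, eval_integral, eval_integral]
    · exact hint' i
    · intro i
      exact Integrable.of_eval fun j => hint' i j
  have e : ∀ x : Euc n, ⟪x - b, y⟫ * ⟪x - b, z⟫ =
      ∑ i, ∑ j, y i * ((x i - b i) * (x j - b j)) * z j := by
    intro x
    rw [inner_eq_sum, inner_eq_sum, Finset.sum_mul_sum]
    refine Finset.sum_congr rfl fun i _ => Finset.sum_congr rfl fun j _ => ?_
    simp only [PiLp.sub_apply]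
    ring
  simp only [e, hC]
  rw [integral_finsetSum _ fun i _ => hitg _ (by fun_prop), Finset.mul_sum]
  refine Finset.sum_congr rfl fun i _ => ?_
  rw [integral_finsetSum _ fun j _ => hitg _ (by fun_prop), Finset.mul_sum]
  refine Finset.sum_congr rfl fun j _ => ?_
  rw [integral_mul_const, integral_const_mul]
  ring

/-- The support function of the inertial ellipsoid is at most the standard deviation. -/
lemma inner_sq_le_of_mem_inertialEllipsoid (hk : IsCompact K) (hv : volume K ≠ 0) {e : Euc n}
    (he : e ∈ inertialEllipsoid K) (y : Euc n) :
    ⟪e, y⟫ ^ 2 ≤ (volume K).toReal⁻¹ * ∫ x in K, ⟪x - centroid K, y⟫ ^ 2 := by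
  have hitg : ∀ f : Euc n → ℝ, Continuous f → IntegrableOn f K := fun f hf =>
    hf.continuousOn.integrableOn_compact hk
  have hvp : 0 < (volume K).toReal := ENNReal.toReal_pos hv hk.measure_lt_top.ne
  set b := centroid K with hb
  have hmul : ∀ y z : Euc n, ∑ i, ∑ j, y i * covMatrix K i j * z j =
      ∑ i, y i * (covMatrix K).mulVec z i := by
    intro y z
    refine Finset.sum_congr rfl fun i _ => ?_
    simp only [Matrix.mulVec, dotProduct, Finset.mul_sum, mul_assoc]
  have hdet : (covMatrix K).det ≠ 0 := by
    intro h0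
    obtain ⟨v, hv0, hCv⟩ := Matrix.exists_mulVec_eq_zero_iff.2 h0
    set w : Euc n := WithLp.toLp 2 v with hw
    have hw0 : w ≠ 0 := by
      intro h
      exact hv0 (by simpa [hw] using h)
    have h1 := covMatrix_form hk w w
    rw [hmul] at h1
    have h2 : (covMatrix K).mulVec w = 0 := hCv
    rw [h2] at h1
    simp only [Pi.zero_apply, mul_zero, Finset.sum_const_zero] at h1
    have h3 : ∫ x in K, ⟪x - b, w⟫ * ⟪x - b, w⟫ = 0 := by
      rcases mul_eq_zero.1 h1.symm with h | h
      · exact absurd h (inv_ne_zero hvp.ne')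
      · exact h
    rw [setIntegral_eq_zero_iff_of_nonneg_ae
      (Filter.Eventually.of_forall fun x => mul_self_nonneg _) (hitg _ (by fun_prop))] at h3
    have h4 : ∀ᵐ x ∂volume, x ∈ K → ⟪x - b, w⟫ = 0 := by
      filter_upwards [(ae_restrict_iff' hk.measurableSet).1 h3] with x hx hxK
      exact mul_self_eq_zero.1 (hx hxK)
    have hX : (innerₛₗ ℝ w : Euc n →ₗ[ℝ] ℝ) ≠ 0 := by
      intro h
      have : ⟪w, w⟫ = 0 := DFunLike.congr_fun h w
      exact hw0 (inner_self_eq_zero.1 this)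
    have h5 := volume_ker_eq_zero hX
    have h6 : volume ((fun x : Euc n => x - b) ⁻¹' {x | (innerₛₗ ℝ w : Euc n →ₗ[ℝ] ℝ) x = 0}) = 0 := by
      rw [(measurePreserving_sub_right volume b).measure_preimage (NullMeasurableSet.of_null h5)]
      exact h5
    refine hv (measure_mono_null_ae ?_ h6)
    filter_upwards [h4] with x hx hxK
    change ⟪w, x - b⟫ = 0
    rw [real_inner_comm]
    exact hx hxK
  set z : Euc n := WithLp.toLp 2 ((covMatrix K)⁻¹.mulVec e) with hz
  have hCz : (covMatrix K).mulVec z = e := by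
    change (covMatrix K).mulVec ((covMatrix K)⁻¹.mulVec e) = e
    rw [Matrix.mulVec_mulVec, Matrix.mul_nonsing_inv _ (isUnit_iff_ne_zero.2 hdet),
      Matrix.one_mulVec]
  have h1 : (volume K).toReal⁻¹ * ∫ x in K, ⟪x - b, y⟫ * ⟪x - b, z⟫ = ⟪e, y⟫ := by
    rw [← covMatrix_form hk, hmul, hCz, inner_eq_sum]
    exact Finset.sum_congr rfl fun i _ => mul_comm _ _
  have h2 : (volume K).toReal⁻¹ * ∫ x in K, ⟪x - b, z⟫ * ⟪x - b, z⟫ ≤ 1 := by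
    rw [← covMatrix_form hk, hmul, hCz]
    refine le_of_eq_of_le (Finset.sum_congr rfl fun i _ => ?_) he
    change (∑ j, (covMatrix K)⁻¹ i j * e j) * e i = _
    rw [Finset.sum_mul]
    exact Finset.sum_congr rfl fun j _ => by ring
  set l := ⟪e, y⟫
  have h3 : 0 ≤ ∫ x in K, (⟪x - b, y⟫ - l * ⟪x - b, z⟫) ^ 2 := integral_nonneg fun x => sq_nonneg _
  have h4 : ∫ x in K, (⟪x - b, y⟫ - l * ⟪x - b, z⟫) ^ 2 = (∫ x in K, ⟪x - b, y⟫ ^ 2) -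
      2 * l * (∫ x in K, ⟪x - b, y⟫ * ⟪x - b, z⟫) +
      l ^ 2 * ∫ x in K, ⟪x - b, z⟫ * ⟪x - b, z⟫ := by
    rw [← integral_const_mul, ← integral_const_mul, ← integral_sub, ← integral_add]
    · congr 1; ext x; ring
    all_goals exact hitg _ (by fun_prop)
  rw [h4] at h3
  have h5 := mul_nonneg (inv_nonneg.2 hvp.le) h3
  set A := ∫ x in K, ⟪x - b, y⟫ ^ 2
  set B := ∫ x in K, ⟪x - b, y⟫ * ⟪x - b, z⟫
  set D := ∫ x in K, ⟪x - b, z⟫ * ⟪x - b, z⟫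
  have h6 : (volume K).toReal⁻¹ * (A - 2 * l * B + l ^ 2 * D) = (volume K).toReal⁻¹ * A -
      2 * l * ((volume K).toReal⁻¹ * B) + l ^ 2 * ((volume K).toReal⁻¹ * D) := by ring
  rw [h6, h1] at h5
  nlinarith [mul_le_mul_of_nonneg_left h2 (sq_nonneg l)]

/-- The translate of `K` whose centroid is the origin. -/
def centered (K : Set (Euc n)) : Set (Euc n) := (fun x => x - centroid K) '' K

lemma setIntegral_centered {E : Type*} [NormedAddCommGroup E] [NormedSpace ℝ E]
    (f : Euc n → E) : ∫ x in centered K, f x = ∫ x in K, f (x - centroid K) :=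
  (measurePreserving_sub_right volume (centroid K)).setIntegral_image_emb
    (MeasurableEquiv.subRight (centroid K)).measurableEmbedding f K

lemma centered_eq : centered K = -centroid K +ᵥ K := by
  ext x
  simp only [centered, Set.mem_image, Set.mem_vadd_set, vadd_eq_add, sub_eq_neg_add]

lemma volume_centered : volume (centered K) = volume K := by
  rw [centered_eq, measure_vadd]

lemma isCompact_centered (hk : IsCompact K) : IsCompact (centered K) :=
  hk.image (by fun_prop)

lemma convex_centered (hc : Convex ℝ K) : Convex ℝ (centered K) := by
  rw [centered_eq]
  exact hc.vadd _

lemma integral_centered (hk : IsCompact K) (hv : volume K ≠ 0) : ∫ x in centered K, x = 0 := by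
  have hvp : 0 < (volume K).toReal := ENNReal.toReal_pos hv hk.measure_lt_top.ne
  have hi : Integrable (fun x : Euc n => x) (volume.restrict K) :=
    continuous_id.continuousOn.integrableOn_compact hk
  have : IsFiniteMeasure (volume.restrict K) := ⟨by simpa using hk.measure_lt_top⟩
  rw [setIntegral_centered, integral_sub hi (integrable_const _), integral_const]
  simp only [Measure.real, Measure.restrict_apply_univ, centroid, smul_smul]
  rw [mul_inv_cancel₀ hvp.ne', one_smul, sub_self]

/-- The support function of a centered body dominates its standard deviation up to a factor
`√(2 n)`: a functional `X` on it takes values in `[-2 n h, h]` and has mean zero, so that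
`∫ (h - X) (X + 2 n h) ≥ 0` bounds its variance. -/
lemma variance_le (hn : 1 ≤ n) (hc : Convex ℝ K) (hk : IsCompact K) (hv : volume K ≠ 0)
    (y : Euc n) : 0 ≤ supp (centered K) y ∧
    (volume K).toReal⁻¹ * ∫ x in K, ⟪x - centroid K, y⟫ ^ 2 ≤
      2 * n * supp (centered K) y ^ 2 := by
  have hvp : 0 < (volume K).toReal := ENNReal.toReal_pos hv hk.measure_lt_top.ne
  have hne : K.Nonempty := nonempty_of_measure_ne_zero hv
  set h := supp (centered K) y
  have hck := isCompact_centered hk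
  have hcv : volume (centered K) ≠ 0 := by rwa [volume_centered]
  have hitg : ∀ f : Euc n → ℝ, Continuous f → IntegrableOn f (centered K) := fun f hf =>
    hf.continuousOn.integrableOn_compact hck
  set X : Euc n →L[ℝ] ℝ := innerSL ℝ y with hX
  have hXa : ∀ x, X x = ⟪x, y⟫ := fun x => real_inner_comm x y
  have hX0 : ∫ x in centered K, X x = 0 := by
    have e := integral_linear hck (X : Euc n →ₗ[ℝ] ℝ)
    rw [integral_centered hk hv, map_zero] at e
    exact e
  have hup : ∀ x ∈ centered K, X x ≤ h := fun x hx => by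
    rw [hXa]
    exact le_supp hck hx y
  have hlo : ∀ x ∈ centered K, -X x ≤ 2 * n * h := fun x hx =>
    neg_le_mul_of_integral_eq_zero hn (convex_centered hc) hck hcv X hX0 hup hx
  have hn' : (1 : ℝ) ≤ n := by exact_mod_cast hn
  constructor
  · obtain ⟨x, hx⟩ := nonempty_of_measure_ne_zero hcv
    nlinarith [hup x hx, hlo x hx]
  · have h1 : 0 ≤ ∫ x in centered K, (h - X x) * (X x + 2 * n * h) :=
      setIntegral_nonneg hck.measurableSet fun x hx =>
        mul_nonneg (by linarith [hup x hx]) (by linarith [hlo x hx])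
    have h2 : ∫ x in centered K, (h - X x) * (X x + 2 * n * h) =
        (volume K).toReal * (2 * n * h ^ 2) + (h - 2 * n * h) * (∫ x in centered K, X x) -
          ∫ x in centered K, X x ^ 2 := by
      have hconst : ∫ _ in centered K, 2 * n * h ^ 2 = (volume K).toReal * (2 * n * h ^ 2) := by
        rw [setIntegral_const, Measure.real, volume_centered, smul_eq_mul]
      rw [← hconst, ← integral_const_mul, ← integral_add, ← integral_sub]
      · congr 1; ext x; ring
      all_goals exact hitg _ (by fun_prop)
    rw [h2, hX0] at h1
    have h3 : ∫ x in centered K, X x ^ 2 = ∫ x in K, ⟪x - centroid K, y⟫ ^ 2 := by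
      rw [setIntegral_centered]
      simp only [hXa]
    rw [inv_mul_le_iff₀ hvp, ← h3]
    linarith

/-- A small centroid barely affects the support function. The constant comes from
`2 n / (n + 1) ^ 2 ≤ 1 / 400`. -/
lemma supp_centered_le (hn : 800 ≤ n) (hc : Convex ℝ K) (hk : IsCompact K) (hv : volume K ≠ 0)
    (hb : centroid K ∈ ((n : ℝ) + 1)⁻¹ • inertialEllipsoid K) (y : Euc n) :
    19 / 20 * supp (centered K) y ≤ supp K y := by
  obtain ⟨e, he, hbe⟩ := hb
  have hbe' : centroid K = ((n : ℝ) + 1)⁻¹ • e := hbe.symm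
  obtain ⟨h0, h1⟩ := variance_le (by omega) hc hk hv y
  have h2 := (inner_sq_le_of_mem_inertialEllipsoid hk hv he y).trans h1
  have hn' : (800 : ℝ) ≤ n := by exact_mod_cast hn
  have hne : (centered K).Nonempty := (nonempty_of_measure_ne_zero hv).image _
  set h := supp (centered K) y
  have h3 : |⟪e, y⟫| ≤ ((n : ℝ) + 1) * (h / 20) := by
    refine abs_le_of_sq_le_sq ?_ (by positivity)
    have : 2 * (n : ℝ) ≤ (n + 1) ^ 2 / 400 := by nlinarith
    calc ⟪e, y⟫ ^ 2 ≤ 2 * n * h ^ 2 := h2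
      _ ≤ (n + 1) ^ 2 / 400 * h ^ 2 := by gcongr
      _ = _ := by ring
  have h4 : -(h / 20) ≤ ⟪centroid K, y⟫ := by
    rw [hbe', real_inner_smul_left, ← div_eq_inv_mul, le_div_iff₀ (by positivity)]
    linarith [neg_abs_le ⟪e, y⟫]
  obtain ⟨_, ⟨x, hx, rfl⟩, hxe⟩ := exists_eq_supp (isCompact_centered hk) hne y
  have h5 := le_supp hk hx y
  have h6 : ⟪x, y⟫ - ⟪centroid K, y⟫ = h := by rw [← inner_sub_left]; exact hxe
  linarith

lemma lintegral_exp_neg_supp_le (hn : 800 ≤ n) (hc : Convex ℝ K) (hk : IsCompact K)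
    (hv : volume K ≠ 0) (hb : centroid K ∈ ((n : ℝ) + 1)⁻¹ • inertialEllipsoid K) :
    ∫⁻ y, ENNReal.ofReal (Real.exp (-supp K y)) ≤
      ENNReal.ofReal ((19 / 20) ^ n)⁻¹ *
        ∫⁻ y, ENNReal.ofReal (Real.exp (-supp (centered K) y)) := by
  rw [← lintegral_comp_smul _ (by norm_num)]
  refine lintegral_mono fun y => ENNReal.ofReal_le_ofReal (Real.exp_le_exp.2 ?_)
  rw [supp_smul (isCompact_centered hk) ((nonempty_of_measure_ne_zero hv).image _) (by norm_num)]
  exact neg_le_neg (supp_centered_le hn hc hk hv hb y)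

end Inertia

/-! ### The covering estimate -/

section Assembly
variable {n : ℕ} {K T : Set (Euc n)}

lemma succ_le_pow (hn : 800 ≤ n) : (n : ℝ) + 1 ≤ (11 / 10) ^ n := by
  have key : ∀ m : ℕ, 60 ≤ m → (m : ℝ) + 1 ≤ (11 / 10) ^ m := by
    intro m hm
    induction m, hm using Nat.le_induction with
    | base => norm_num
    | succ m hm ih =>
      have : (60 : ℝ) ≤ m := by exact_mod_cast hm
      rw [pow_succ]
      push_cast
      linarith
  exact key n (by omega)

/-- The numerical comparison `(n + 1) (96 e / (19/20)) ^ n ≤ (97 π) ^ n`. -/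
lemma numerical_bound (hn : 800 ≤ n) :
    (24 : ℝ) ^ n * (((19 / 20) ^ n)⁻¹ * (Real.exp n * (4 ^ n * (n + 1)))) ≤
      97 ^ n * Real.pi ^ n := by
  have he : Real.exp n = Real.exp 1 ^ n := by rw [← Real.exp_nat_mul, mul_one]
  calc (24 : ℝ) ^ n * (((19 / 20) ^ n)⁻¹ * (Real.exp n * (4 ^ n * (n + 1))))
      ≤ 24 ^ n * (((19 / 20) ^ n)⁻¹ * (Real.exp 1 ^ n * (4 ^ n * (11 / 10) ^ n))) := by
        rw [he]
        gcongr
        exact succ_le_pow hn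
    _ = (24 * ((19 / 20)⁻¹ * (Real.exp 1 * (4 * (11 / 10))))) ^ n := by
        simp only [mul_pow, inv_pow]
    _ ≤ (97 * Real.pi) ^ n := by
        refine pow_le_pow_left₀ (by positivity) ?_ n
        have h1 := Real.exp_one_lt_d9
        have h2 := Real.pi_gt_d2
        norm_num at h1 h2 ⊢
        linarith
    _ = _ := mul_pow _ _ _

lemma polarBody_anti {A B : Set (Euc n)} (h : A ⊆ B) : polarBody B ⊆ polarBody A :=
  fun _ hx y hy => hx y (h hy)

/-- The covering estimate for an explicit cover `Λ` of `T` by translates of `K`. -/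
lemma exists_cover_polarBody (hn : 800 ≤ n) (hK : IsConvexBody K) (hT : IsConvexBody T)
    (h0 : (0 : Euc n) ∈ K) (hs : ∀ x ∈ T, -x ∈ T)
    (hb : centroid K ∈ ((n : ℝ) + 1)⁻¹ • inertialEllipsoid K) {Λ : Finset (Euc n)}
    (hΛ : T ⊆ ↑Λ + K) :
    ∃ S : Finset (Euc n), polarBody K ⊆ ↑S + polarBody T ∧ S.card ≤ 97 ^ n * Λ.card := by
  obtain ⟨hKc, hKk, hKi⟩ := hK
  obtain ⟨hTc, hTk, hTi⟩ := hT
  have hv : volume K ≠ 0 := (Measure.measure_pos_of_nonempty_interior _ hKi).ne'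
  have hKne : K.Nonempty := ⟨0, h0⟩
  obtain ⟨r, hr, hball⟩ := exists_closedBall_subset hTc hTi hs
  have hT0 : (0 : Euc n) ∈ T := hball (Metric.mem_closedBall_self hr.le)
  -- `L` is a symmetric body containing both `K` and `T`.
  set L := K - K + T with hL
  have hLc : Convex ℝ L := (hKc.sub hKc).add hTc
  have hLk : IsCompact L := by
    rw [hL, sub_eq_add_neg]
    exact (hKk.add hKk.neg).add hTk
  have hLs : ∀ x ∈ L, -x ∈ L := by
    rintro _ ⟨_, ⟨k, hk, k', hk', rfl⟩, t, ht, rfl⟩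
    refine ⟨k' - k, ⟨k', hk', k, hk, rfl⟩, -t, hs t ht, ?_⟩
    change k' - k + -t = -(k - k' + t)
    abel
  have hTL : T ⊆ L := fun t ht => ⟨0, ⟨0, h0, 0, h0, sub_zero _⟩, t, ht, zero_add _⟩
  have hKL : K ⊆ L := fun k hk => ⟨k, ⟨k, hk, 0, h0, sub_zero _⟩, 0, hT0, add_zero _⟩
  have hLne : L.Nonempty := ⟨0, hKL h0⟩
  have hLm : MeasurableSet (polarBody L) := by
    rw [polarBody_eq hLk hLne]
    exact (isClosed_le (continuous_supp hLk hLne) continuous_const).measurableSet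
  have hTps : ∀ x ∈ polarBody T, -x ∈ polarBody T := fun x hx y hy => by
    rw [inner_neg_left, ← inner_neg_right]
    exact hx _ (hs y hy)
  have hMahler := pi_pow_le_volume_mul hLc hLk hLs hr (hball.trans hTL)
  rw [lintegral_exp_neg_supp hLk (hKL h0)] at hMahler
  have hpi : (0 : ℝ) < Real.pi ^ n := by positivity
  have hvD : volume (polarBody L) ≠ 0 := by
    intro h
    rw [h, mul_zero, mul_zero, nonpos_iff_eq_zero, ENNReal.ofReal_eq_zero] at hMahler
    exact hpi.not_ge hMahler
  have hcv : volume (centered K) ≠ 0 := by rwa [volume_centered]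
  have hcen := lintegral_exp_neg_supp_mul_volume_le (by omega) (convex_centered hKc)
    (isCompact_centered hKk) hcv (integral_centered hKk hv)
  have hshift := lintegral_exp_neg_supp_le hn hKc hKk hv hb
  rw [volume_centered] at hcen
  rw [lintegral_exp_neg_supp hKk h0] at hshift
  set I := ∫⁻ y, ENNReal.ofReal (Real.exp (-supp (centered K) y))
  have hI : I ≠ ∞ := by
    intro h
    rw [h, ENNReal.top_mul hv, top_le_iff] at hcen
    exact (by finiteness : ENNReal.ofReal (Real.exp n) * (4 ^ n * (n + 1)) ≠ ∞) hcen
  have hvA : volume (polarBody K) ≠ ∞ := by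
    intro h
    rw [h, ENNReal.mul_top (by exact_mod_cast n.factorial_ne_zero), top_le_iff] at hshift
    exact ENNReal.mul_ne_top ENNReal.ofReal_ne_top hI hshift
  obtain ⟨S, hS, hcard⟩ := exists_cover_of_packing (convex_polarBody K) (convex_polarBody T) hTps
    hLm (polarBody_anti hKL) (polarBody_anti hTL) hvD hvA
  refine ⟨S, hS, ?_⟩
  have hvol := volume_sub_add_le hKc hKk h0 hv hΛ
  have main : (S.card : ℝ≥0∞) * ENNReal.ofReal (Real.pi ^ n) ≤ Λ.card *
      (24 ^ n * (ENNReal.ofReal ((19 / 20) ^ n)⁻¹ *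
        (ENNReal.ofReal (Real.exp n) * (4 ^ n * (n + 1))))) := by
    calc (S.card : ℝ≥0∞) * ENNReal.ofReal (Real.pi ^ n)
        ≤ S.card * (volume L * (n.factorial * volume (polarBody L))) := by gcongr
      _ = volume L * n.factorial * (S.card * volume (polarBody L)) := by ring
      _ ≤ volume L * n.factorial * (3 ^ n * volume (polarBody K)) := by gcongr
      _ = volume L * (3 ^ n * (n.factorial * volume (polarBody K))) := by ring
      _ ≤ Λ.card * (8 ^ n * volume K) * (3 ^ n * (ENNReal.ofReal ((19 / 20) ^ n)⁻¹ * I)) := by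
        gcongr
      _ = Λ.card * ((8 ^ n * 3 ^ n) * (ENNReal.ofReal ((19 / 20) ^ n)⁻¹ * (I * volume K))) := by
        ring
      _ ≤ Λ.card * ((8 ^ n * 3 ^ n) * (ENNReal.ofReal ((19 / 20) ^ n)⁻¹ *
        (ENNReal.ofReal (Real.exp n) * (4 ^ n * (n + 1))))) := by gcongr
      _ = _ := by rw [← mul_pow]; norm_num
  have main' : (S.card : ℝ) * Real.pi ^ n ≤ Λ.card *
      (24 ^ n * (((19 / 20) ^ n)⁻¹ * (Real.exp n * (4 ^ n * (n + 1))))) := by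
    have h := ENNReal.toReal_mono (by finiteness) main
    simp only [ENNReal.toReal_mul, ENNReal.toReal_natCast, ENNReal.toReal_pow,
      ENNReal.toReal_ofNat] at h
    rw [ENNReal.toReal_ofReal hpi.le, ENNReal.toReal_ofReal (by positivity),
      ENNReal.toReal_ofReal (by positivity), ENNReal.toReal_add (by finiteness) (by finiteness),
      ENNReal.toReal_natCast, ENNReal.toReal_one] at h
    exact h
  have h1 : (S.card : ℝ) * Real.pi ^ n ≤ 97 ^ n * Λ.card * Real.pi ^ n :=
    main'.trans ((mul_le_mul_of_nonneg_left (numerical_bound hn) (by positivity)).trans_eq (by ring))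
  exact_mod_cast le_of_mul_le_mul_right h1 hpi

end Assembly

theorem covering_number_dual_entropy_right :
    ∃ n₀ : ℕ, ∀ n ≥ n₀, ∀ K T : Set (Euc n),
      IsConvexBody K → IsConvexBody T → (0 : Euc n) ∈ K → T = -T →
      centroid K ∈ ((n : ℝ) + 1)⁻¹ • inertialEllipsoid K →
      coveringNumber (polarBody K) (polarBody T) ≤ 97 ^ n * coveringNumber T K := by
  refine ⟨800, fun n hn K T hK hT h0 hTs hb => ?_⟩
  have hs : ∀ x ∈ T, -x ∈ T := fun x hx => by
    rw [hTs] at hx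
    exact hx
  rcases Set.eq_empty_or_nonempty
    {m : ℕ∞ | ∃ Λ : Finset (Euc n), (Λ.card : ℕ∞) = m ∧ T ⊆ ↑Λ + K} with he | hne
  · have : coveringNumber T K = ⊤ := by rw [coveringNumber, he, sInf_empty]
    rw [this, ENat.mul_top (pow_ne_zero _ (by norm_num))]
    exact le_top
  · obtain ⟨Λ, hcard, hΛ⟩ := csInf_mem hne
    obtain ⟨S, hS, hle⟩ := exists_cover_polarBody hn hK hT h0 hs hb hΛ
    have h1 : coveringNumber (polarBody K) (polarBody T) ≤ (S.card : ℕ∞) :=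
      sInf_le ⟨S, rfl, hS⟩
    have h2 : coveringNumber T K = (Λ.card : ℕ∞) := hcard.symm
    rw [h2]
    exact h1.trans (by exact_mod_cast hle)

end
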